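/- arXiv:2007.12742 — 4 statements merged into one kernel-verified Lean document; each statement's English description precedes it below -/
import Mathlib

section
/- Let m ∈ ℕ and let g(s) = Σ_{j=0}^{m} a_j s^j be a polynomial of degree at most m with real coefficients, and let X be a standard Gaussian random variable. Then 𝔻g(X) ≥ (1/m) 𝔼|g'(X)|², where 𝔻g(X) := 𝔼(g(X) − 𝔼g(X))² is the variance of g(X). -/
/-!
The proof replaces the Hermite expansion by its infinitesimal counterpart. Write `𝔼 p` for the
Gaussian integral of a polynomial `p`, and let `L p = X p' - p''` be the Ornstein–Uhlenbeck
operator (whose eigenvectors are the Hermite polynomials, `L Heₙ = n Heₙ`). Stein's identity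
`𝔼 p' = 𝔼 (X p)` gives `𝔼 (q L p) = 𝔼 (q' p')`, and since `(L p)' = p' + L p'`, it follows that
`𝔼 (L p)² = 𝔼 p'² + 𝔼 p''²`.

With these, `𝔼 p'² ≤ m 𝔼 p²` for `deg p ≤ m` follows by induction on `m`: the inductive hypothesis
for `p'` gives `𝔼 (L p)² ≤ m 𝔼 p'²`, and then
`0 ≤ 𝔼 (L p - m p)² = 𝔼 (L p)² - 2 m 𝔼 p'² + m² 𝔼 p² ≤ m (m 𝔼 p² - 𝔼 p'²)`.
The theorem is this inequality for `p = g - 𝔼 g`.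
-/

open MeasureTheory ProbabilityTheory

open Polynomial in
lemma integrable_eval_gaussianReal (p : ℝ[X]) :
    Integrable (fun x => p.eval x) (gaussianReal 0 1) := by
  induction p using Polynomial.induction_on' with
  | add p q hp hq =>
    simp only [eval_add]
    exact hp.add hq
  | monomial n a =>
    simp only [eval_monomial]
    refine Integrable.const_mul ?_ a
    have h := (memLp_id_gaussianReal (μ := 0) (v := 1) (n : NNReal)).integrable_norm_pow'
    refine h.mono (by fun_prop) ?_
    simp

open Polynomial in
/-- The expectation `𝔼 p(X)` of a polynomial in a standard Gaussian variable, as a linear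
functional on polynomials. -/
noncomputable def gaussExp : ℝ[X] →ₗ[ℝ] ℝ where
  toFun p := ∫ x, p.eval x ∂(gaussianReal 0 1)
  map_add' p q := by
    simp only [eval_add]
    exact integral_add (integrable_eval_gaussianReal p) (integrable_eval_gaussianReal q)
  map_smul' c p := by
    simp only [eval_smul, RingHom.id_apply]
    exact integral_smul c _

open Polynomial in
lemma gaussExp_apply (p : ℝ[X]) : gaussExp p = ∫ x, p.eval x ∂(gaussianReal 0 1) := rfl

open Polynomial in
lemma gaussExp_sq_nonneg (p : ℝ[X]) : 0 ≤ gaussExp (p ^ 2) := by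
  rw [gaussExp_apply]
  exact integral_nonneg fun x => by simpa using sq_nonneg (p.eval x)

lemma hasDerivAt_gaussianPDFReal_zero_one (x : ℝ) :
    HasDerivAt (gaussianPDFReal 0 1) (-x * gaussianPDFReal 0 1 x) x := by
  have h : HasDerivAt (fun y : ℝ => -(y - 0) ^ 2 / (2 * ((1 : NNReal) : ℝ))) (-x) x := by
    have := (((hasDerivAt_id x).sub_const 0).pow 2).neg.div_const (2 * ((1 : NNReal) : ℝ))
    refine this.congr_deriv ?_
    simp
    ring
  rw [gaussianPDFReal_def]
  refine (h.exp.const_mul _).congr_deriv ?_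
  ring

open Polynomial in
lemma integrable_eval_mul_gaussianPDFReal (p : ℝ[X]) :
    Integrable (fun x => p.eval x * gaussianPDFReal 0 1 x) := by
  have h := integrable_eval_gaussianReal p
  rw [gaussianReal_of_var_ne_zero 0 one_ne_zero,
    integrable_withDensity_iff (measurable_gaussianPDF 0 1)
      (Filter.Eventually.of_forall fun _ => gaussianPDF_lt_top)] at h
  simpa using h

open Polynomial in
/-- Stein's identity: the total derivative of `p` times the Gaussian density integrates to zero. -/
lemma gaussExp_derivative (p : ℝ[X]) : gaussExp (derivative p) = gaussExp (X * p) := by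
  rw [← sub_eq_zero, ← map_sub, gaussExp_apply,
    integral_gaussianReal_eq_integral_smul one_ne_zero]
  refine integral_eq_zero_of_hasDerivAt_of_integrable
    (f := fun x => p.eval x * gaussianPDFReal 0 1 x) (fun x => ?_) ?_
    (integrable_eval_mul_gaussianPDFReal p)
  · refine ((p.hasDerivAt x).mul (hasDerivAt_gaussianPDFReal_zero_one x)).congr_deriv ?_
    simp
    ring
  · simpa only [smul_eq_mul, mul_comm (gaussianPDFReal 0 1 _)] using
      integrable_eval_mul_gaussianPDFReal (derivative p - X * p)

open Polynomial in
/-- The Ornstein–Uhlenbeck operator `p ↦ X p' - p''`, with the sign making it nonnegative. -/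
noncomputable def ouOp (p : ℝ[X]) : ℝ[X] := X * derivative p - derivative (derivative p)

open Polynomial in
lemma gaussExp_mul_ouOp (q p : ℝ[X]) :
    gaussExp (q * ouOp p) = gaussExp (derivative q * derivative p) := by
  have h := gaussExp_derivative (q * derivative p)
  rw [derivative_mul, map_add] at h
  have e : q * ouOp p = X * (q * derivative p) - q * derivative (derivative p) := by
    rw [ouOp]; ring
  rw [e, map_sub]
  linarith

open Polynomial in
lemma derivative_ouOp (p : ℝ[X]) :
    derivative (ouOp p) = derivative p + ouOp (derivative p) := by
  simp [ouOp]
  ring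

open Polynomial in
lemma gaussExp_ouOp_sq (p : ℝ[X]) :
    gaussExp (ouOp p ^ 2) =
      gaussExp (derivative p ^ 2) + gaussExp (derivative (derivative p) ^ 2) := by
  rw [sq, gaussExp_mul_ouOp, derivative_ouOp, add_mul, map_add, mul_comm (ouOp _),
    gaussExp_mul_ouOp, sq, sq]

open Polynomial in
/-- Reverse Poincaré inequality: differentiation has norm at most `√m` in `L²` of the Gaussian
measure on polynomials of degree at most `m`. -/
lemma gaussExp_derivative_sq_le (m : ℕ) (p : ℝ[X]) (hp : p.natDegree ≤ m) :
    gaussExp (derivative p ^ 2) ≤ m * gaussExp (p ^ 2) := by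
  induction m generalizing p with
  | zero => simp [derivative_of_natDegree_zero (Nat.le_zero.mp hp)]
  | succ n ih =>
    have h1 := ih (derivative p) ((natDegree_derivative_le p).trans (by omega))
    have h2 := gaussExp_ouOp_sq p
    have h3 := gaussExp_sq_nonneg (ouOp p - ((n : ℝ) + 1) • p)
    have e : (ouOp p - ((n : ℝ) + 1) • p) ^ 2 =
        ouOp p ^ 2 - (2 * ((n : ℝ) + 1)) • (p * ouOp p) + (((n : ℝ) + 1) ^ 2) • p ^ 2 := by
      simp only [smul_eq_C_mul, C_mul, C_pow, map_ofNat]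
      ring
    rw [e, map_add, map_sub, map_smul, map_smul, gaussExp_mul_ouOp, ← sq, smul_eq_mul,
      smul_eq_mul] at h3
    push_cast
    have hn : (0 : ℝ) < (n : ℝ) + 1 := by positivity
    refine le_of_mul_le_mul_left ?_ hn
    linarith

/-- Poincaré-type bound via the Hermite expansion: for a polynomial `g` of degree at most `m`
and `X` standard Gaussian, `𝔻g(X) ≥ (1/m) 𝔼|g'(X)|²`. -/
theorem variance_ge_deriv_sq (m : ℕ) (hm : 1 ≤ m) (g : Polynomial ℝ)
    (hg : g.natDegree ≤ m) :
    (1 / m : ℝ) * ∫ x, (Polynomial.eval x (Polynomial.derivative g)) ^ 2 ∂(gaussianReal 0 1)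
      ≤ variance (fun x => Polynomial.eval x g) (gaussianReal 0 1) := by
  have h := gaussExp_derivative_sq_le m (g - Polynomial.C (gaussExp g)) (by simpa using hg)
  rw [variance_eq_integral (by fun_prop)]
  have hm' : (0 : ℝ) < m := by exact_mod_cast hm
  rw [one_div, inv_mul_le_iff₀ hm']
  simpa [gaussExp_apply] using h
end

section
/- Let m ∈ ℕ. There exists a constant c₂(m) > 0 depending only on m such that for every polynomial g(s) = Σ_{j=0}^{m} a_j s^j of degree at most m with real coefficients and a standard Gaussian random variable X, one has 𝔻g(X) ≥ c₂(m) max_{1 ≤ j ≤ m} |a_j|². -/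
open MeasureTheory ProbabilityTheory

/-!
The constant term does not affect the variance, so the variance is a function of
`a = (a₁, …, a_m) ∈ ℝᵐ` alone, and the maximum in the statement is the sup norm of `a`. This
function is a quadratic form whose matrix is the covariance matrix of `X, X², …, X^m`; in
particular it is continuous and homogeneous of degree two. It vanishes only at `a = 0`
(`variance_tailPoly_pos`): a polynomial with zero variance is almost surely constant, and since
the Gaussian measure has no atoms the polynomial then takes one value at infinitely many points.
The constant `c` is the minimum of the form on the compact unit sphere, and homogeneity gives the
inequality for all `a`.
-/

/-- The polynomial `∑_{i=1}^m a_i s^i` without constant term; the coefficient of `s^(i+1)` is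
`a i`, where `i : Fin m` counts from zero. -/
noncomputable def tailPoly {m : ℕ} (a : Fin m → ℝ) : Polynomial ℝ :=
  ∑ i : Fin m, Polynomial.C (a i) * Polynomial.X ^ ((i : ℕ) + 1)

lemma eval_tailPoly {m : ℕ} (a : Fin m → ℝ) (x : ℝ) :
    (tailPoly a).eval x = ∑ i : Fin m, a i * x ^ ((i : ℕ) + 1) := by
  simp [tailPoly, Polynomial.eval_finsetSum]

lemma coeff_tailPoly {m : ℕ} (a : Fin m → ℝ) (i : Fin m) :
    (tailPoly a).coeff ((i : ℕ) + 1) = a i := by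
  simp [tailPoly, Polynomial.coeff_X_pow, Fin.val_inj]

lemma memLp_pow_gaussianReal (k : ℕ) :
    MemLp (fun x : ℝ => x ^ k) 2 (gaussianReal 0 1) := by
  rw [memLp_two_iff_integrable_sq (by fun_prop)]
  have h := integrable_pow_of_mem_interior_integrableExpSet (X := id) (μ := gaussianReal 0 1)
    (by simp) (k * 2)
  simpa [← pow_mul] using h

lemma memLp_eval_tailPoly {m : ℕ} (a : Fin m → ℝ) :
    MemLp (fun x => (tailPoly a).eval x) 2 (gaussianReal 0 1) := by
  simp_rw [eval_tailPoly]
  exact memLp_finsetSum _ fun i _ => (memLp_pow_gaussianReal _).const_mul (a i)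

lemma continuous_variance_tailPoly (m : ℕ) :
    Continuous fun a : Fin m → ℝ =>
      variance (fun x => (tailPoly a).eval x) (gaussianReal 0 1) := by
  have h : ∀ a : Fin m → ℝ, variance (fun x => (tailPoly a).eval x) (gaussianReal 0 1) =
      ∑ i : Fin m, ∑ j : Fin m, a i * (a j *
        covariance (fun x : ℝ => x ^ ((i : ℕ) + 1)) (fun x : ℝ => x ^ ((j : ℕ) + 1))
          (gaussianReal 0 1)) := by
    intro a
    simp_rw [eval_tailPoly]
    rw [variance_fun_sum fun i => (memLp_pow_gaussianReal _).const_mul (a i)]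
    simp_rw [covariance_const_mul_left, covariance_const_mul_right]
  simp_rw [h]
  fun_prop

lemma variance_tailPoly_pos {m : ℕ} (a : Fin m → ℝ) (ha : a ≠ 0) :
    0 < variance (fun x => (tailPoly a).eval x) (gaussianReal 0 1) := by
  refine lt_of_le_of_ne (variance_nonneg _ _) fun h0 => ha ?_
  have hae := ae_eq_integral_of_variance_eq_zero (memLp_eval_tailPoly a) h0.symm
  set c := ∫ x, (tailPoly a).eval x ∂(gaussianReal 0 1)
  have hC : tailPoly a = Polynomial.C c := by
    refine Polynomial.eq_of_infinite_eval_eq _ _ fun hfin => ?_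
    -- A finite set is null for the atomless Gaussian measure, yet this one has full measure.
    have := nullSingletonClass_gaussianReal (μ := 0) (v := 1) one_ne_zero
    have hnull : ∀ᵐ x ∂(gaussianReal 0 1),
        x ∉ {x | (tailPoly a).eval x = (Polynomial.C c).eval x} :=
      measure_eq_zero_iff_ae_notMem.mp (hfin.measure_zero _)
    obtain ⟨x, hx, hx'⟩ := (hae.and hnull).exists
    exact hx' (by simpa using hx)
  ext i
  rw [← coeff_tailPoly a i, hC]
  simp

lemma variance_tailPoly_smul {m : ℕ} (r : ℝ) (a : Fin m → ℝ) :
    variance (fun x => (tailPoly (r • a)).eval x) (gaussianReal 0 1) =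
      r ^ 2 * variance (fun x => (tailPoly a).eval x) (gaussianReal 0 1) := by
  rw [← variance_const_mul]
  congr 1
  ext x
  simp [eval_tailPoly, Finset.mul_sum, mul_assoc]

lemma variance_eval_eq_tailPoly {m : ℕ} (g : Polynomial ℝ) (hg : g.natDegree ≤ m) :
    variance (fun x => g.eval x) (gaussianReal 0 1) =
      variance (fun x => (tailPoly fun i : Fin m => g.coeff ((i : ℕ) + 1)).eval x)
        (gaussianReal 0 1) := by
  rw [← variance_add_const (memLp_eval_tailPoly _).aestronglyMeasurable (g.coeff 0)]
  congr 1
  ext x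
  rw [Polynomial.eval_eq_sum_range' (Nat.lt_succ_of_le hg), Finset.sum_range_succ', eval_tailPoly,
    Fin.sum_univ_eq_sum_range (fun i => g.coeff (i + 1) * x ^ (i + 1))]
  simp

/-- For every `m ≥ 1` there is `c₂(m) > 0` such that for every polynomial
`g(s) = Σ_{j=0}^m a_j s^j` of degree at most `m` and `X` standard Gaussian,
`𝔻g(X) ≥ c₂(m) max_{1 ≤ j ≤ m} |a_j|²`. -/
theorem variance_ge_max_coeff (m : ℕ) (hm : 1 ≤ m) :
    ∃ c : ℝ, 0 < c ∧
      ∀ g : Polynomial ℝ, g.natDegree ≤ m →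
        c * ((Finset.Icc 1 m).sup' (Finset.nonempty_Icc.mpr hm)
              (fun j => |g.coeff j|)) ^ 2
          ≤ variance (fun x => Polynomial.eval x g) (gaussianReal 0 1) := by
  have : Nonempty (Fin m) := ⟨⟨0, hm⟩⟩
  obtain ⟨a₀, ha₀, hmin⟩ := (isCompact_sphere (0 : Fin m → ℝ) 1).exists_isMinOn
    (NormedSpace.sphere_nonempty.mpr zero_le_one) (continuous_variance_tailPoly m).continuousOn
  have ha₀' : ‖a₀‖ = 1 := by simpa using ha₀
  have hpos := variance_tailPoly_pos a₀ (norm_ne_zero_iff.mp (by simp [ha₀']))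
  refine ⟨_, hpos, fun g hg => ?_⟩
  rw [variance_eval_eq_tailPoly g hg]
  set a : Fin m → ℝ := fun i => g.coeff ((i : ℕ) + 1) with ha
  have hsup : (Finset.Icc 1 m).sup' (Finset.nonempty_Icc.mpr hm) (fun j => |g.coeff j|) ≤ ‖a‖ := by
    refine Finset.sup'_le _ _ fun j hj => ?_
    obtain ⟨h1, h2⟩ := Finset.mem_Icc.mp hj
    have := norm_le_pi_norm a ⟨j - 1, by omega⟩
    simpa [ha, Nat.sub_add_cancel h1] using this
  have hsup0 : 0 ≤ (Finset.Icc 1 m).sup' (Finset.nonempty_Icc.mpr hm) (fun j => |g.coeff j|) :=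
    (abs_nonneg _).trans
      (Finset.le_sup' (fun j => |g.coeff j|) (Finset.mem_Icc.mpr ⟨le_rfl, hm⟩))
  refine (mul_le_mul_of_nonneg_left (pow_le_pow_left₀ hsup0 hsup 2) hpos.le).trans ?_
  by_cases h0 : a = 0
  · simp [h0, variance_nonneg]
  have hn : ‖a‖ ≠ 0 := norm_ne_zero_iff.mpr h0
  have hmem : ‖a‖⁻¹ • a ∈ Metric.sphere (0 : Fin m → ℝ) 1 := by
    simp [norm_smul, inv_mul_cancel₀ hn]
  have hle := isMinOn_iff.mp hmin _ hmem
  have hs := variance_tailPoly_smul ‖a‖ (‖a‖⁻¹ • a)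
  rw [smul_inv_smul₀ hn] at hs
  rw [hs, mul_comm]
  exact mul_le_mul_of_nonneg_left hle (sq_nonneg _)
end

section
/- Let m, d ∈ ℕ with m ≤ d and let A, B > 0. Let h : (0,∞) → [0,∞) be a function such that (i) h(t) ≤ 2 h(ε) + A t^{1/m} [ |ln ε|^{d−m} + 1 ] for all t > 0 and all ε ∈ (0, e^{−1}], and (ii) h(t) ≤ B t^{1/d} for all t > 0. Then there exists a constant C > 0 depending only on m, d and A such that h(t) ≤ C t^{1/m} [ |ln t|^{d−m} + 1 ] for all t ∈ (0, e^{−1}]. -/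
/-!
Write `q = 4⁻ᵈ` and `tₖ = t qᵏ`. Applying the first hypothesis to the pairs `(tₖ, tₖ₊₁)` and
iterating gives
`h(t) ≤ 2ᴺ h(t_N) + A ∑_{k<N} 2ᵏ tₖ^{1/m} (|ln tₖ₊₁|^{d-m} + 1)`.
Since `m ≤ d`, `tₖ^{1/m} ≤ 4⁻ᵏ t^{1/m}`, and since `|ln t| ≥ 1`, passing from `ln t` to `ln tₖ₊₁`
costs at most a factor `(1+2d)(k+1)`. The sum is therefore bounded by a multiple, depending only on
`m` and `d`, of the convergent series `∑ (k+1)^{d-m} 2⁻ᵏ`. The remainder `2ᴺ h(t_N)` is at most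
`B t^{1/d} 2⁻ᴺ` by the second hypothesis, so it vanishes in the limit and `B` does not enter `C`.
-/

lemma summable_succ_pow_mul_half_pow (n : ℕ) :
    Summable (fun k : ℕ => ((k : ℝ) + 1) ^ n * (1 / 2 : ℝ) ^ k) := by
  have h1 := summable_pow_mul_geometric_of_norm_lt_one (R := ℝ) n (r := 1 / 2) (by norm_num)
  have h2 := ((summable_nat_add_iff 1).2 h1).mul_left 2
  refine h2.congr fun k => ?_
  push_cast
  ring

lemma rpow_scale_le (m d : ℕ) (hm : 1 ≤ m) (hmd : m ≤ d) {t : ℝ} (ht : 0 < t) (k : ℕ) :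
    (t * ((1 / 4 : ℝ) ^ d) ^ k) ^ ((1 : ℝ) / m) ≤ t ^ ((1 : ℝ) / m) * (1 / 4 : ℝ) ^ k := by
  have hm' : (0 : ℝ) < m := by exact_mod_cast hm
  rw [Real.mul_rpow ht.le (by positivity)]
  gcongr
  rw [← pow_mul, ← Real.rpow_natCast, ← Real.rpow_mul (by norm_num), ← Real.rpow_natCast]
  apply Real.rpow_le_rpow_of_exponent_ge (by norm_num) (by norm_num)
  rw [mul_one_div, le_div_iff₀ hm', mul_comm]
  exact_mod_cast Nat.mul_le_mul_right k hmd

lemma abs_log_scale_le (d : ℕ) {t : ℝ} (ht : 0 < t) (hte : t ≤ Real.exp (-1)) (k : ℕ) :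
    |Real.log (t * ((1 / 4 : ℝ) ^ d) ^ (k + 1))| ≤ (1 + 2 * d) * (k + 1) * |Real.log t| := by
  have hl : Real.log t ≤ -1 := (Real.log_le_iff_le_exp ht).2 hte
  have h4 : Real.log (1 / 4 : ℝ) = -(2 * Real.log 2) := by
    rw [one_div, Real.log_inv, show (4 : ℝ) = 2 ^ 2 by norm_num, Real.log_pow]
    norm_num
  have h2 : Real.log 2 ≤ 1 := by linarith [Real.log_two_lt_d9]
  have h2' : 0 ≤ Real.log 2 := Real.log_nonneg (by norm_num)
  rw [Real.log_mul ht.ne' (by positivity), ← pow_mul, Real.log_pow, h4, abs_of_neg (a := Real.log t)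
    (by linarith)]
  push_cast
  set x := -Real.log t with hx
  have hx1 : 1 ≤ x := by linarith
  have hd : (0 : ℝ) ≤ d * (k + 1) := by positivity
  have ha : Real.log 2 * (d * (k + 1)) ≤ x * (d * (k + 1)) :=
    mul_le_mul_of_nonneg_right (by linarith) hd
  have hb : 0 ≤ Real.log 2 * (d * (k + 1)) := mul_nonneg h2' hd
  have hk : 0 ≤ (k : ℝ) * x := by positivity
  rw [abs_le]
  constructor <;> nlinarith

lemma log_weight_scale_le (d n : ℕ) {t : ℝ} (ht : 0 < t) (hte : t ≤ Real.exp (-1)) (k : ℕ) :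
    |Real.log (t * ((1 / 4 : ℝ) ^ d) ^ (k + 1))| ^ n + 1 ≤
      (1 + 2 * d) ^ n * ((k : ℝ) + 1) ^ n * (|Real.log t| ^ n + 1) := by
  have h1 := pow_le_pow_left₀ (abs_nonneg _) (abs_log_scale_le d ht hte k) n
  rw [mul_pow, mul_pow] at h1
  have h2 : 1 ≤ (1 + 2 * (d : ℝ)) ^ n * ((k : ℝ) + 1) ^ n := by
    rw [← mul_pow]
    apply one_le_pow₀
    have : (0 : ℝ) ≤ d * k := by positivity
    nlinarith [(Nat.cast_nonneg d : (0 : ℝ) ≤ d), (Nat.cast_nonneg k : (0 : ℝ) ≤ k)]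
  linarith

/-- Dyadic iteration lemma: if `h : (0,∞) → [0,∞)` satisfies
`h(t) ≤ 2 h(ε) + A t^{1/m} (|ln ε|^{d-m} + 1)` for all `t > 0`, `ε ∈ (0, e⁻¹]`, and
`h(t) ≤ B t^{1/d}` for all `t > 0`, then `h(t) ≤ C t^{1/m} (|ln t|^{d-m} + 1)` on `(0, e⁻¹]`
for a constant `C` depending only on `m`, `d` and `A`. -/
theorem dyadic_iteration (m d : ℕ) (hm : 1 ≤ m) (hmd : m ≤ d) (A : ℝ) (hA : 0 < A) :
    ∃ C : ℝ, 0 < C ∧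
      ∀ (B : ℝ), 0 < B →
        ∀ h : ℝ → ℝ, (∀ t : ℝ, 0 < t → 0 ≤ h t) →
          (∀ t : ℝ, 0 < t → ∀ ε : ℝ, 0 < ε → ε ≤ Real.exp (-1) →
            h t ≤ 2 * h ε + A * t ^ ((1 : ℝ) / m) * (|Real.log ε| ^ (d - m) + 1)) →
          (∀ t : ℝ, 0 < t → h t ≤ B * t ^ ((1 : ℝ) / d)) →
          ∀ t : ℝ, 0 < t → t ≤ Real.exp (-1) →
            h t ≤ C * t ^ ((1 : ℝ) / m) * (|Real.log t| ^ (d - m) + 1) := by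
  set n := d - m with hn
  set S : ℝ := ∑' k : ℕ, ((k : ℝ) + 1) ^ n * (1 / 2 : ℝ) ^ k with hS
  have hSsum := summable_succ_pow_mul_half_pow n
  have hSpos : 0 < S := hSsum.tsum_pos (fun k => by positivity) 0 (by norm_num)
  refine ⟨A * (1 + 2 * d) ^ n * S, by positivity, ?_⟩
  intro B hB h _ h1 h2 t ht hte
  set q : ℝ := (1 / 4 : ℝ) ^ d with hq
  have hq0 : 0 < q := by positivity
  have hq1 : q ≤ 1 := pow_le_one₀ (by norm_num) (by norm_num)
  set L : ℝ := |Real.log t| ^ n + 1 with hL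
  have hL0 : 0 < L := by positivity
  set K : ℝ := A * (1 + 2 * d) ^ n * t ^ ((1 : ℝ) / m) * L with hK
  have hK0 : 0 ≤ K := by positivity
  have hstep : ∀ k : ℕ, 2 ^ k * h (t * q ^ k) ≤
      2 ^ (k + 1) * h (t * q ^ (k + 1)) + K * (((k : ℝ) + 1) ^ n * (1 / 2 : ℝ) ^ k) := by
    intro k
    have hε : t * q ^ (k + 1) ≤ Real.exp (-1) :=
      (mul_le_of_le_one_right ht.le (pow_le_one₀ hq0.le hq1)).trans hte
    have hi := h1 (t * q ^ k) (by positivity) (t * q ^ (k + 1)) (by positivity) hε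
    have hw : A * (t * q ^ k) ^ ((1 : ℝ) / m) * (|Real.log (t * q ^ (k + 1))| ^ n + 1) ≤
        A * (t ^ ((1 : ℝ) / m) * (1 / 4 : ℝ) ^ k) *
          ((1 + 2 * d) ^ n * ((k : ℝ) + 1) ^ n * L) := by
      gcongr
      · exact rpow_scale_le m d hm hmd ht k
      · exact log_weight_scale_le d n ht hte k
    have h24 : (2 : ℝ) ^ k * (1 / 4) ^ k = (1 / 2) ^ k := by
      rw [← mul_pow]
      norm_num
    calc 2 ^ k * h (t * q ^ k)
        ≤ 2 ^ k * (2 * h (t * q ^ (k + 1)) + A * (t ^ ((1 : ℝ) / m) * (1 / 4 : ℝ) ^ k) *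
          ((1 + 2 * d) ^ n * ((k : ℝ) + 1) ^ n * L)) := by
          gcongr
          linarith
      _ = _ := by
          rw [hK, ← h24]
          ring
  have hiter : ∀ N : ℕ, h t ≤ 2 ^ N * h (t * q ^ N) +
      K * ∑ k ∈ Finset.range N, ((k : ℝ) + 1) ^ n * (1 / 2 : ℝ) ^ k := by
    intro N
    induction N with
    | zero => simp
    | succ N ih =>
      rw [Finset.sum_range_succ, mul_add]
      linarith [hstep N]
  have hbound : ∀ N : ℕ, h t ≤ B * t ^ ((1 : ℝ) / d) * (1 / 2 : ℝ) ^ N + K * S := by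
    intro N
    have hrem : 2 ^ N * h (t * q ^ N) ≤ B * t ^ ((1 : ℝ) / d) * (1 / 2 : ℝ) ^ N := by
      calc 2 ^ N * h (t * q ^ N)
          ≤ 2 ^ N * (B * (t ^ ((1 : ℝ) / d) * (1 / 4 : ℝ) ^ N)) := by
            gcongr
            refine (h2 _ (by positivity)).trans ?_
            gcongr
            exact rpow_scale_le d d (hm.trans hmd) le_rfl ht N
        _ = B * t ^ ((1 : ℝ) / d) * (2 ^ N * (1 / 4) ^ N) := by ring
        _ = _ := by
            rw [← mul_pow]
            norm_num
    have hpart : ∑ k ∈ Finset.range N, ((k : ℝ) + 1) ^ n * (1 / 2 : ℝ) ^ k ≤ S :=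
      hSsum.sum_le_tsum _ fun k _ => by positivity
    linarith [hiter N, mul_le_mul_of_nonneg_left hpart hK0]
  have hlim : Filter.Tendsto (fun N : ℕ => B * t ^ ((1 : ℝ) / d) * (1 / 2 : ℝ) ^ N + K * S)
      Filter.atTop (nhds (B * t ^ ((1 : ℝ) / d) * 0 + K * S)) :=
    ((tendsto_pow_atTop_nhds_zero_of_lt_one (by norm_num) (by norm_num)).const_mul _).add_const _
  have hfin := ge_of_tendsto' hlim hbound
  calc h t ≤ B * t ^ ((1 : ℝ) / d) * 0 + K * S := hfin
    _ = _ := by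
      rw [hK]
      ring
end

section
/- Let m, d ∈ ℕ with d ≥ m, and let X = (X₁,…,Xₙ) be a standard Gaussian random vector in ℝⁿ. There exists a constant C(m,d) > 0 depending only on m and d such that for every non-constant polynomial f(x) = Σ_{j₁=0}^{m} … Σ_{jₙ=0}^{m} a_{j₁,…,jₙ} x₁^{j₁}⋯xₙ^{jₙ} (each variable appearing to a power at most m) of total degree d[f] ≤ d with a[f] = 1, the density ϱ_f of f(X) satisfies σ(ϱ_f, t) ≤ C(m,d) t^{1/m} [ |ln t|^{d−m} + 1 ] for all t > 0. -/
/-!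
Only the following consequence of the smoothness of the test functions is used: `φ` is `C¹`,
`|φ| ≤ t` and `|φ'| ≤ 1` (`IsTest`).  The quantity to bound is `∫ φ'(f) dγ`.

*One variable.*  For a polynomial `p` of degree at most `m`, write
`φ'(p) = φ'(p) p' · h(p') + φ'(p) (1 - p' h(p'))` with a `C¹` regularisation `h` of `1/u` that
agrees with it for `|u| ≥ 1`.  The first term is integrated by parts; it costs `C t`, because the
total variation of `h(p')` is controlled by the number of zeros of `p''`.  The second term is
at most `γ(|p'| ≤ 1)`.  After scaling, `|∫ φ'(p) dγ| ≤ C t / δ + γ(|p'| ≤ δ)`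
(`abs_integral_le_scaled`).  Lagrange interpolation at well-separated points of the sublevel set
gives `|coeff_k P| γ(|P| ≤ δ)^{deg P} ≤ C δ` (`remez`).  Together: if some coefficient of `p` of
positive index is at least `β` in absolute value and `t = β s^m`, then `|∫ φ'(p) dγ| ≤ C s`
(`oneDim_bound`).

*Several variables.*  One coordinate is resampled at a time, and the induction is on the degree
`D` of a monomial `j` of top degree with `|coeff_j f| ≥ 1` (`HasTarget`).  A bound on
`∫ φ'(f) dγ` for all test functions gives small ball estimates for `f`, through `φ = δ arctan(·/δ)`
(`sublevel_le_integral`).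
If `D ≤ m`, the bound `C t / δ + γ(|∂ᵢ f| ≤ δ)` and the small ball estimate for `∂ᵢ f` give the
exponent `1/D` with no logarithm (`smooth_nolog`).
If `D > m`, let `g` be the coefficient of `xᵢ^{jᵢ}` in `f`.  Conditionally on the other variables
`oneDim_bound` gives `C s / |g|^{1/m}` with `s = t^{1/m}`; summing over the exponential levels of
`|g|`, each of which contributes `C s` times the logarithms coming from the small ball estimate
for `g`, there are about `|log s|` levels, so each variable removed costs at most one more
logarithm (`smooth_step`, `smooth_log`).  Each removal lowers `D` by at least one and no logarithm
appears once `D ≤ m`, whence the power `d - m`.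

*Density.*  The same bound, applied to the primitive of a bump function supported near a compact
null set, shows that the law of `f` is absolutely continuous; its density is the Radon-Nikodym
derivative.
-/

open MeasureTheory ProbabilityTheory

/-- The modulus `σ(ϱ, ε) = sup { ∫ φ' ϱ : φ ∈ C₀^∞(ℝ), ‖φ‖_∞ ≤ ε, ‖φ'‖_∞ ≤ 1 }`. -/
noncomputable def sigmaMod (ρ : ℝ → ℝ) (ε : ℝ) : ℝ :=
  sSup {r : ℝ | ∃ φ : ℝ → ℝ, ContDiff ℝ (⊤ : ℕ∞) φ ∧ HasCompactSupport φ ∧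
    (∀ x, |φ x| ≤ ε) ∧ (∀ x, |deriv φ x| ≤ 1) ∧ r = ∫ s : ℝ, deriv φ s * ρ s}

/-- The standard Gaussian measure on `ℝⁿ` (i.i.d. `N(0,1)` coordinates). -/
noncomputable def stdGaussian (n : ℕ) : Measure (Fin n → ℝ) :=
  Measure.pi fun _ => gaussianReal 0 1

/-- `a[f]`: the maximum of the absolute values of the coefficients of the monomials of
top total degree of `f`. -/
noncomputable def topCoeff {n : ℕ} (f : MvPolynomial (Fin n) ℝ) : ℝ :=
  sSup {c : ℝ | ∃ j : Fin n →₀ ℕ, (j.sum fun _ e => e) = f.totalDegree ∧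
    c = |MvPolynomial.coeff j f|}

/-! ### Total variation and a regularised reciprocal -/

/-- The total variation of a function bounded by `M` whose derivative vanishes only on the finite
set `S` is at most `2 M (|S ∩ (a, b)| + 1)`: the function is monotone between consecutive zeros. -/
theorem integral_abs_deriv_le (F F' : ℝ → ℝ) (hd : ∀ x, HasDerivAt F (F' x) x)
    (hc : Continuous F') (M : ℝ) (hM : ∀ x, |F x| ≤ M) (S : Finset ℝ)
    (hS : ∀ x, F' x = 0 → x ∈ S) (a b : ℝ) (hab : a ≤ b) :
    ∫ x in a..b, |F' x| ≤ 2 * M * ((S.filter (fun x => x ∈ Set.Ioo a b)).card + 1) := by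
  have key : ∀ k : ℕ, ∀ a b : ℝ, a ≤ b →
      (S.filter (fun x => x ∈ Set.Ioo a b)).card ≤ k →
      ∫ x in a..b, |F' x| ≤ 2 * M * (k + 1) := by
    have hM0 : 0 ≤ M := (abs_nonneg _).trans (hM 0)
    intro k
    induction k using Nat.strong_induction_on with
    | _ k ih =>
      intro a b hab hk
      by_cases hne : ∃ s ∈ S, s ∈ Set.Ioo a b
      · obtain ⟨s, hsS, hs⟩ := hne
        set A := S.filter (fun x => x ∈ Set.Ioo a s)
        set B := S.filter (fun x => x ∈ Set.Ioo s b)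
        have hcard : A.card + B.card + 1 ≤ k := by
          refine le_trans ?_ hk
          have hdisj : Disjoint A B := by
            rw [Finset.disjoint_left]
            intro x hx hx'
            simp only [A, B, Finset.mem_filter, Set.mem_Ioo] at hx hx'
            linarith [hx.2.2, hx'.2.1]
          rw [← Finset.card_union_of_disjoint hdisj]
          have hns : s ∉ A ∪ B := by
            simp [A, B]
          rw [← Finset.card_insert_of_notMem hns]
          apply Finset.card_le_card
          intro x hx
          simp only [A, B, Finset.mem_insert, Finset.mem_union, Finset.mem_filter, Set.mem_Ioo]
            at hx ⊢
          rcases hx with rfl | hx | hx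
          · exact ⟨hsS, hs⟩
          · exact ⟨hx.1, hx.2.1, hx.2.2.trans hs.2⟩
          · exact ⟨hx.1, hs.1.trans hx.2.1, hx.2.2⟩
        have h1 := ih A.card (by omega) a s hs.1.le le_rfl
        have h2 := ih B.card (by omega) s b hs.2.le le_rfl
        rw [← intervalIntegral.integral_add_adjacent_intervals
          (hc.abs.intervalIntegrable a s) (hc.abs.intervalIntegrable s b)]
        have hcard' : (A.card : ℝ) + B.card + 1 ≤ k := by exact_mod_cast hcard
        nlinarith
      · push Not at hne
        have hne0 : ∀ x ∈ Set.Ioo a b, F' x ≠ 0 := fun x hx h0 => hne x (hS x h0) hx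
        have hint : ∫ x in a..b, F' x = F b - F a :=
          intervalIntegral.integral_eq_sub_of_hasDerivAt (fun x _ => hd x)
            (hc.intervalIntegrable a b)
        have hsgn : (∀ x ∈ Set.Ioo a b, 0 < F' x) ∨ (∀ x ∈ Set.Ioo a b, F' x < 0) := by
          by_contra! hcon
          obtain ⟨⟨x, hx, hx0⟩, ⟨y, hy, hy0⟩⟩ := hcon
          obtain ⟨z, hz, hz0⟩ := (isPreconnected_Ioo (a := a) (b := b)).intermediate_value hx hy
            hc.continuousOn ⟨hx0, hy0⟩
          exact hne0 z hz hz0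
        have hle : ∫ x in a..b, |F' x| = |F b - F a| := by
          rcases hsgn with h | h
          · have : ∫ x in a..b, |F' x| = ∫ x in a..b, F' x := by
              rw [intervalIntegral.integral_of_le hab, intervalIntegral.integral_of_le hab,
                integral_Ioc_eq_integral_Ioo, integral_Ioc_eq_integral_Ioo]
              exact setIntegral_congr_fun measurableSet_Ioo fun x hx => abs_of_pos (h x hx)
            rw [← hint, ← this, abs_of_nonneg]
            exact intervalIntegral.integral_nonneg hab fun _ _ => abs_nonneg _
          · have : ∫ x in a..b, |F' x| = -∫ x in a..b, F' x := by
              rw [intervalIntegral.integral_of_le hab, intervalIntegral.integral_of_le hab,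
                integral_Ioc_eq_integral_Ioo, integral_Ioc_eq_integral_Ioo, ← integral_neg]
              exact setIntegral_congr_fun measurableSet_Ioo fun x hx => abs_of_neg (h x hx)
            rw [← hint, ← abs_neg, ← this, abs_of_nonneg]
            exact intervalIntegral.integral_nonneg hab fun _ _ => abs_nonneg _
        rw [hle]
        have := abs_sub (F b) (F a)
        have h1 := hM a
        have h2 := hM b
        have hk0 : (0 : ℝ) ≤ k := Nat.cast_nonneg k
        nlinarith
  exact key _ a b hab le_rfl

/-- The `C¹` function equal to `v⁻¹` for `v ≥ 1` and to its tangent line `2 - v` for `v ≤ 1`. -/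
noncomputable def cutK (v : ℝ) : ℝ := if v ≤ 1 then 2 - v else v⁻¹

/-- The derivative of `cutK`. -/
noncomputable def cutK' (v : ℝ) : ℝ := if v ≤ 1 then -1 else -(v ^ 2)⁻¹

theorem cutK_hasDerivAt (v : ℝ) : HasDerivAt cutK (cutK' v) v := by
  have hlin : ∀ v : ℝ, HasDerivAt (fun v : ℝ => 2 - v) (-1) v := fun v => by
    simpa using (hasDerivAt_id v).const_sub 2
  rcases lt_trichotomy v 1 with h | rfl | h
  · have : cutK' v = -1 := if_pos h.le
    rw [this]
    refine (hlin v).congr_of_eventuallyEq ?_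
    filter_upwards [Iio_mem_nhds h] with u hu
    exact if_pos (le_of_lt hu)
  · have h1 : cutK' 1 = -1 := if_pos le_rfl
    rw [h1, ← hasDerivWithinAt_univ, ← Set.Iic_union_Ici (a := (1 : ℝ))]
    refine HasDerivWithinAt.union ?_ ?_
    · refine (hlin 1).hasDerivWithinAt.congr (fun u hu => if_pos hu) (if_pos le_rfl)
    · have : HasDerivWithinAt (fun v : ℝ => v⁻¹) (-1) (Set.Ici 1) 1 := by
        simpa using (hasDerivAt_inv (one_ne_zero (α := ℝ))).hasDerivWithinAt (s := Set.Ici 1)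
      refine this.congr (fun u hu => ?_) ?_
      · rcases eq_or_lt_of_le (show (1 : ℝ) ≤ u from hu) with rfl | h
        · norm_num [cutK]
        · exact if_neg (not_le.2 h)
      · norm_num [cutK]
  · have : cutK' v = -(v ^ 2)⁻¹ := if_neg (not_le.2 h)
    rw [this]
    refine (hasDerivAt_inv (by positivity)).congr_of_eventuallyEq ?_
    filter_upwards [Ioi_mem_nhds h] with u hu
    exact if_neg (not_le.2 hu)

theorem cutK'_continuous : Continuous cutK' := by
  have h : cutK' = fun v => -((max v 1) ^ 2)⁻¹ := by
    funext v
    unfold cutK'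
    split_ifs with h
    · rw [max_eq_right h]; norm_num
    · rw [max_eq_left (not_le.1 h).le]
  rw [h]
  refine Continuous.neg (Continuous.inv₀ (by fun_prop) fun v => ?_)
  have : (1 : ℝ) ≤ max v 1 := le_max_right _ _
  positivity

/-- A `C¹` regularisation of `1 / u`, equal to it for `|u| ≥ 1`. -/
noncomputable def cutH (u : ℝ) : ℝ := u * cutK (u ^ 2)

/-- The derivative of `cutH`. -/
noncomputable def cutH' (u : ℝ) : ℝ := cutK (u ^ 2) + u * (cutK' (u ^ 2) * (2 * u))

theorem cutH_hasDerivAt (u : ℝ) : HasDerivAt cutH (cutH' u) u := by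
  have h1 : HasDerivAt (fun u : ℝ => u ^ 2) (2 * u) u := by simpa using hasDerivAt_pow 2 u
  have h2 : HasDerivAt (cutK ∘ fun u : ℝ => u ^ 2) (cutK' (u ^ 2) * (2 * u)) u :=
    HasDerivAt.comp u (cutK_hasDerivAt (u ^ 2)) h1
  have h3 := (hasDerivAt_id' u).mul h2
  rw [one_mul] at h3
  exact h3

theorem cutK_continuous : Continuous cutK :=
  continuous_iff_continuousAt.2 fun v => (cutK_hasDerivAt v).continuousAt

theorem cutH_continuous : Continuous cutH :=
  continuous_iff_continuousAt.2 fun v => (cutH_hasDerivAt v).continuousAt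

theorem cutH'_continuous : Continuous cutH' := by
  have := cutK'_continuous
  have := cutK_continuous
  unfold cutH'
  fun_prop

theorem abs_cutH_le (u : ℝ) : |cutH u| ≤ 2 := by
  unfold cutH cutK
  split_ifs with h
  · rw [abs_mul, abs_of_nonneg (by linarith : 0 ≤ 2 - u ^ 2)]
    have : |u| ≤ 1 := by rwa [sq_le_one_iff_abs_le_one] at h
    nlinarith [abs_nonneg u, sq_nonneg u]
  · have h' : 1 < |u| := by rw [not_le, one_lt_sq_iff_one_lt_abs] at h; exact h
    rw [abs_mul, abs_inv, abs_pow, ← div_eq_mul_inv, div_le_iff₀ (by positivity)]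
    nlinarith

theorem abs_cutH'_le (u : ℝ) : |cutH' u| ≤ 4 * (1 + u ^ 2)⁻¹ := by
  rw [← div_eq_mul_inv, le_div_iff₀ (by positivity)]
  unfold cutH' cutK cutK'
  split_ifs with h
  · have : 2 - u ^ 2 + u * (-1 * (2 * u)) = 2 - 3 * u ^ 2 := by ring
    rw [this]
    have : |2 - 3 * u ^ 2| ≤ 2 := by rw [abs_le]; constructor <;> nlinarith [sq_nonneg u]
    nlinarith [sq_nonneg u, abs_nonneg (2 - 3 * u ^ 2)]
  · have hu : 1 < u ^ 2 := not_le.1 h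
    have hu0 : u ≠ 0 := by rintro rfl; norm_num at hu
    have : (u ^ 2)⁻¹ + u * (-((u ^ 2) ^ 2)⁻¹ * (2 * u)) = -(u ^ 2)⁻¹ := by field_simp; ring
    rw [this, abs_neg, abs_of_pos (by positivity), ← div_eq_inv_mul, div_le_iff₀ (by positivity)]
    linarith

theorem abs_one_sub_mul_cutH_le (u : ℝ) :
    |1 - u * cutH u| ≤ Set.indicator {u : ℝ | |u| ≤ 1} (fun _ => (1 : ℝ)) u := by
  unfold cutH cutK
  by_cases h : u ^ 2 ≤ 1
  · have h' : |u| ≤ 1 := by rwa [sq_le_one_iff_abs_le_one] at h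
    rw [if_pos h, Set.indicator_of_mem (show u ∈ {u : ℝ | |u| ≤ 1} from h')]
    have : 1 - u * (u * (2 - u ^ 2)) = (1 - u ^ 2) ^ 2 := by ring
    rw [this, abs_of_nonneg (sq_nonneg _)]
    nlinarith [sq_nonneg u]
  · have h' : ¬ |u| ≤ 1 := by rwa [sq_le_one_iff_abs_le_one] at h
    have hu0 : u ≠ 0 := by rintro rfl; norm_num at h
    rw [if_neg h, Set.indicator_of_notMem (show u ∉ {u : ℝ | |u| ≤ 1} from h')]
    have : 1 - u * (u * (u ^ 2)⁻¹) = 0 := by field_simp; ring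
    rw [this, abs_zero]

/-! ### Test functions and integration by parts on the line -/

/-- `φ` is an admissible test function at level `t` with continuous derivative `ψ`:
`|φ| ≤ t` and `|ψ| ≤ 1` everywhere. -/
structure IsTest (t : ℝ) (φ ψ : ℝ → ℝ) : Prop where
  hasDerivAt : ∀ u, HasDerivAt φ (ψ u) u
  continuous : Continuous ψ
  abs_le : ∀ u, |φ u| ≤ t
  abs_deriv_le : ∀ u, |ψ u| ≤ 1

theorem IsTest.scale {t : ℝ} {φ ψ : ℝ → ℝ} (h : IsTest t φ ψ) {δ : ℝ} (hδ : 0 < δ) :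
    IsTest (t / δ) (fun u => φ (δ * u) / δ) (fun u => ψ (δ * u)) where
  hasDerivAt u := by
    have h1 : HasDerivAt (fun u : ℝ => δ * u) δ u := by
      simpa using (hasDerivAt_id' u).const_mul δ
    have h2 : HasDerivAt (φ ∘ fun u => δ * u) (ψ (δ * u) * δ) u :=
      HasDerivAt.comp u (h.hasDerivAt (δ * u)) h1
    have h3 := h2.div_const δ
    rw [mul_div_cancel_right₀ _ hδ.ne'] at h3
    exact h3
  continuous := h.continuous.comp (continuous_const.mul continuous_id)
  abs_le u := by
    rw [abs_div, abs_of_pos hδ]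
    exact div_le_div_of_nonneg_right (h.abs_le _) hδ.le
  abs_deriv_le u := h.abs_deriv_le _

/-- A test function whose derivative dominates half the indicator of `[-δ, δ]`; it turns
smoothness bounds into small ball estimates. -/
theorem isTest_arctan {δ : ℝ} (hδ : 0 < δ) :
    IsTest (2 * δ) (fun u => δ * Real.arctan (u / δ)) (fun u => (1 + (u / δ) ^ 2)⁻¹) where
  hasDerivAt u := by
    have h1 : HasDerivAt (fun u : ℝ => u / δ) (1 / δ) u := (hasDerivAt_id' u).div_const δ
    have h2 := (h1.arctan).const_mul δ
    refine h2.congr_deriv ?_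
    field_simp
  continuous := by
    refine Continuous.inv₀ (by fun_prop) fun u => ?_
    positivity
  abs_le u := by
    rw [abs_mul, abs_of_pos hδ, mul_comm]
    refine mul_le_mul_of_nonneg_right ?_ hδ.le
    rw [abs_le]
    constructor
    · linarith [Real.neg_pi_div_two_lt_arctan (u / δ), Real.pi_lt_four]
    · linarith [Real.arctan_lt_pi_div_two (u / δ), Real.pi_lt_four]
  abs_deriv_le u := by
    rw [abs_of_pos (by positivity)]
    exact inv_le_one_of_one_le₀ (by nlinarith [sq_nonneg (u / δ)])

theorem half_indicator_le {δ : ℝ} (hδ : 0 < δ) (u : ℝ) :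
    Set.indicator {u : ℝ | |u| ≤ δ} (fun _ => (1 : ℝ)) u ≤ 2 * (1 + (u / δ) ^ 2)⁻¹ := by
  by_cases h : |u| ≤ δ
  · rw [Set.indicator_of_mem (show u ∈ {u : ℝ | |u| ≤ δ} from h), ← div_eq_mul_inv,
      le_div_iff₀ (by positivity)]
    have : (u / δ) ^ 2 ≤ 1 := by
      rw [sq_le_one_iff_abs_le_one, abs_div, abs_of_pos hδ, div_le_one hδ]
      exact h
    linarith
  · rw [Set.indicator_of_notMem (show u ∉ {u : ℝ | |u| ≤ δ} from h)]
    positivity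

/-- The standard Gaussian density on `ℝ`. -/
noncomputable abbrev gpdf : ℝ → ℝ := gaussianPDFReal 0 1

theorem gpdf_eq (x : ℝ) : gpdf x = (Real.sqrt (2 * Real.pi))⁻¹ * Real.exp (-x ^ 2 / 2) := by
  simp [gpdf, gaussianPDFReal]

theorem gpdf_nonneg (x : ℝ) : 0 ≤ gpdf x := gaussianPDFReal_nonneg _ _ _

theorem gpdf_le_exp (x : ℝ) : gpdf x ≤ Real.exp (-x ^ 2 / 2) := by
  rw [gpdf_eq]
  have h : (Real.sqrt (2 * Real.pi))⁻¹ ≤ 1 := by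
    apply inv_le_one_of_one_le₀
    rw [Real.one_le_sqrt]
    linarith [Real.pi_gt_three]
  nlinarith [Real.exp_pos (-x ^ 2 / 2)]

theorem gpdf_le_one (x : ℝ) : gpdf x ≤ 1 :=
  (gpdf_le_exp x).trans (Real.exp_le_one_iff.2 (by nlinarith [sq_nonneg x]))

theorem abs_mul_gpdf_le (x : ℝ) : |x| * gpdf x ≤ 1 := by
  have h1 : |x| ≤ Real.exp (x ^ 2 / 2) := by
    have := Real.add_one_le_exp (x ^ 2 / 2)
    have h2 : |x| ^ 2 = x ^ 2 := sq_abs x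
    nlinarith [sq_nonneg (|x| - 1)]
  calc |x| * gpdf x ≤ Real.exp (x ^ 2 / 2) * Real.exp (-x ^ 2 / 2) :=
        mul_le_mul h1 (gpdf_le_exp x) (gpdf_nonneg x) (Real.exp_pos _).le
    _ = 1 := by rw [← Real.exp_add]; simp; ring

theorem gpdf_hasDerivAt (x : ℝ) : HasDerivAt gpdf (-x * gpdf x) x := by
  have h1 : HasDerivAt (fun x : ℝ => -x ^ 2 / 2) (-x) x := by
    have := ((hasDerivAt_pow 2 x).neg).div_const 2
    refine this.congr_deriv ?_
    norm_num
    ring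
  have h2 := (h1.exp).const_mul (Real.sqrt (2 * Real.pi))⁻¹
  have h3 : gpdf = fun x => (Real.sqrt (2 * Real.pi))⁻¹ * Real.exp (-x ^ 2 / 2) :=
    funext gpdf_eq
  rw [h3]
  refine h2.congr_deriv ?_
  ring

theorem gpdf_continuous : Continuous gpdf :=
  continuous_iff_continuousAt.2 fun v => (gpdf_hasDerivAt v).continuousAt

theorem integral_abs_mul_gpdf_le (a b : ℝ) (hab : a ≤ b) :
    ∫ x in a..b, |x| * gpdf x ≤ 4 := by
  have hc := gpdf_continuous
  have h := integral_abs_deriv_le gpdf (fun x => -x * gpdf x) gpdf_hasDerivAt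
    (by fun_prop) 1 (fun x => by rw [abs_of_nonneg (gpdf_nonneg x)]; exact gpdf_le_one x)
    {0} (fun x hx => by
      have : gpdf x ≠ 0 := (gaussianPDFReal_pos 0 1 x one_ne_zero).ne'
      simpa [this] using hx) a b hab
  have h1 : ((({0} : Finset ℝ).filter (fun x => x ∈ Set.Ioo a b)).card : ℝ) ≤ 1 := by
    have := Finset.card_filter_le ({0} : Finset ℝ) (fun x => x ∈ Set.Ioo a b)
    rw [Finset.card_singleton] at this
    exact_mod_cast this
  have h2 : ∀ x : ℝ, |-x * gpdf x| = |x| * gpdf x := fun x => by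
    rw [abs_mul, abs_neg, abs_of_nonneg (gpdf_nonneg x)]
  simp only [h2] at h
  linarith

/-- Bound for the total variation of `arctan ∘ P`, which is bounded and, unless `P` is constant,
has at most `deg P` critical points. -/
theorem integral_abs_derivative_div_le (P : Polynomial ℝ) (a b : ℝ) (hab : a ≤ b) :
    ∫ x in a..b, |P.derivative.eval x| * (1 + (P.eval x) ^ 2)⁻¹ ≤ 4 * (P.natDegree + 1) := by
  by_cases h0 : P.derivative = 0
  · simp only [h0, Polynomial.eval_zero, abs_zero, zero_mul, intervalIntegral.integral_zero]
    positivity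
  have h := integral_abs_deriv_le (fun x => Real.arctan (P.eval x))
    (fun x => P.derivative.eval x * (1 + (P.eval x) ^ 2)⁻¹)
    (fun x => by
      have := (P.hasDerivAt x).arctan
      convert this using 1
      rw [one_div, mul_comm])
    (by
      refine Continuous.mul (by fun_prop) (Continuous.inv₀ (by fun_prop) fun u => ?_)
      positivity) 2
    (fun x => by
      rw [abs_le]
      constructor
      · linarith [Real.neg_pi_div_two_lt_arctan (P.eval x), Real.pi_lt_four]
      · linarith [Real.arctan_lt_pi_div_two (P.eval x), Real.pi_lt_four])
    P.derivative.roots.toFinset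
    (fun x hx => by
      have : (1 + (P.eval x) ^ 2)⁻¹ ≠ 0 := by positivity
      rw [mul_eq_zero, or_iff_left this] at hx
      rw [Multiset.mem_toFinset, Polynomial.mem_roots h0]
      exact hx) a b hab
  have h1 : ((P.derivative.roots.toFinset.filter (fun x => x ∈ Set.Ioo a b)).card : ℝ)
      ≤ P.natDegree := by
    have h2 := Finset.card_filter_le P.derivative.roots.toFinset (fun x => x ∈ Set.Ioo a b)
    have h3 := Multiset.toFinset_card_le P.derivative.roots
    have h4 := P.derivative.card_roots'
    have h5 := P.natDegree_derivative_le
    exact_mod_cast h2.trans (h3.trans (h4.trans (h5.trans (Nat.sub_le _ _))))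
  have h2 : ∀ x : ℝ, |P.derivative.eval x * (1 + (P.eval x) ^ 2)⁻¹| =
      |P.derivative.eval x| * (1 + (P.eval x) ^ 2)⁻¹ := fun x => by
    rw [abs_mul, abs_of_nonneg (by positivity : (0 : ℝ) ≤ (1 + (P.eval x) ^ 2)⁻¹)]
  simp only [h2] at h
  linarith

/-- Integration by parts of `(φ ∘ p)'` against `cutH (p')` times the Gaussian density. -/
theorem abs_integral_byParts_le {t : ℝ} {φ ψ : ℝ → ℝ} (h : IsTest t φ ψ) (p : Polynomial ℝ)
    (a b : ℝ) (hab : a ≤ b) :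
    |∫ x in a..b, (ψ (p.eval x) * p.derivative.eval x) *
        (cutH (p.derivative.eval x) * gpdf x)| ≤ t * (16 * (p.natDegree + 2)) := by
  set P := p.derivative with hP
  have ht : 0 ≤ t := (abs_nonneg _).trans (h.abs_le 0)
  have hcg := gpdf_continuous
  have hcH := cutH_continuous
  have hcH' := cutH'_continuous
  have hcψ := h.continuous
  have hcφ : Continuous φ :=
    continuous_iff_continuousAt.2 fun v => (h.hasDerivAt v).continuousAt
  set v' : ℝ → ℝ := fun x => (cutH' (P.eval x) * P.derivative.eval x) * gpdf x
    + cutH (P.eval x) * (-x * gpdf x) with hv'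
  have hcv' : Continuous v' := by fun_prop
  have hu : ∀ x, HasDerivAt (fun x => φ (p.eval x)) (ψ (p.eval x) * P.eval x) x := fun x =>
    HasDerivAt.comp x (h.hasDerivAt (p.eval x)) (p.hasDerivAt x)
  have hv : ∀ x, HasDerivAt (fun x => cutH (P.eval x) * gpdf x) (v' x) x := fun x => by
    have h1 : HasDerivAt (cutH ∘ fun x => P.eval x)
        (cutH' (P.eval x) * P.derivative.eval x) x :=
      HasDerivAt.comp x (cutH_hasDerivAt (P.eval x)) (P.hasDerivAt x)
    exact h1.mul (gpdf_hasDerivAt x)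
  have hibp := intervalIntegral.integral_deriv_mul_eq_sub (a := a) (b := b)
    (u := fun x => φ (p.eval x)) (v := fun x => cutH (P.eval x) * gpdf x)
    (u' := fun x => ψ (p.eval x) * P.eval x) (v' := v')
    (fun x _ => hu x) (fun x _ => hv x)
    (Continuous.intervalIntegrable (by fun_prop) _ _) (hcv'.intervalIntegrable _ _)
  rw [intervalIntegral.integral_add (Continuous.intervalIntegrable (by fun_prop) _ _)
    (Continuous.intervalIntegrable (by fun_prop) _ _)] at hibp
  have hbd : ∀ x, |φ (p.eval x) * (cutH (P.eval x) * gpdf x)| ≤ t * 2 := fun x => by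
    rw [abs_mul, abs_mul, abs_of_nonneg (gpdf_nonneg x)]
    refine mul_le_mul (h.abs_le _) ?_ (mul_nonneg (abs_nonneg _) (gpdf_nonneg x)) ht
    calc |cutH (P.eval x)| * gpdf x ≤ 2 * 1 :=
          mul_le_mul (abs_cutH_le _) (gpdf_le_one x) (gpdf_nonneg x) (by norm_num)
      _ = 2 := by norm_num
  have hcinv : Continuous fun x => (1 + (P.eval x) ^ 2)⁻¹ :=
    Continuous.inv₀ (by fun_prop) fun u => by positivity
  have hint : |∫ x in a..b, φ (p.eval x) * v' x| ≤
      t * (4 * (4 * (P.natDegree + 1)) + 2 * 4) := by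
    refine (intervalIntegral.abs_integral_le_integral_abs hab).trans ?_
    have hpt : ∀ x ∈ Set.Icc a b, |φ (p.eval x) * v' x| ≤
        t * (4 * (|P.derivative.eval x| * (1 + (P.eval x) ^ 2)⁻¹) + 2 * (|x| * gpdf x)) := by
      intro x _
      rw [abs_mul]
      refine mul_le_mul (h.abs_le _) ?_ (abs_nonneg _) ht
      refine (abs_add_le _ _).trans (add_le_add ?_ ?_)
      · rw [abs_mul, abs_mul, abs_of_nonneg (gpdf_nonneg x)]
        have h1 := abs_cutH'_le (P.eval x)
        have h2 := gpdf_le_one x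
        have h3 := gpdf_nonneg x
        calc |cutH' (P.eval x)| * |P.derivative.eval x| * gpdf x
            ≤ (4 * (1 + (P.eval x) ^ 2)⁻¹) * |P.derivative.eval x| * 1 := by gcongr
          _ = _ := by ring
      · rw [abs_mul, abs_mul, abs_neg, abs_of_nonneg (gpdf_nonneg x)]
        exact mul_le_mul_of_nonneg_right (abs_cutH_le _)
          (mul_nonneg (abs_nonneg _) (gpdf_nonneg x))
    refine (intervalIntegral.integral_mono_on hab (Continuous.intervalIntegrable (by fun_prop) _ _)
      (Continuous.intervalIntegrable (by fun_prop) _ _) hpt).trans ?_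
    rw [intervalIntegral.integral_const_mul]
    refine mul_le_mul_of_nonneg_left ?_ ht
    rw [intervalIntegral.integral_add (Continuous.intervalIntegrable (by fun_prop) _ _)
      (Continuous.intervalIntegrable (by fun_prop) _ _), intervalIntegral.integral_const_mul,
      intervalIntegral.integral_const_mul]
    have h1 := integral_abs_derivative_div_le P a b hab
    have h2 := integral_abs_mul_gpdf_le a b hab
    linarith
  have hdeg : (P.natDegree : ℝ) ≤ p.natDegree := by
    exact_mod_cast (p.natDegree_derivative_le.trans (Nat.sub_le _ _))
  have e : (∫ x in a..b, (ψ (p.eval x) * P.eval x) * (cutH (P.eval x) * gpdf x)) =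
      φ (p.eval b) * (cutH (P.eval b) * gpdf b) - φ (p.eval a) * (cutH (P.eval a) * gpdf a)
        - ∫ x in a..b, φ (p.eval x) * v' x := by linarith
  rw [e]
  have h3 := hbd a
  have h4 := hbd b
  rw [abs_le] at h3 h4 hint ⊢
  constructor <;> nlinarith

/-- The standard Gaussian measure on `ℝ`. -/
noncomputable abbrev gm : Measure ℝ := gaussianReal 0 1

theorem integral_gm (F : ℝ → ℝ) : ∫ x, F x ∂gm = ∫ x, F x * gpdf x := by
  rw [integral_gaussianReal_eq_integral_smul one_ne_zero]
  simp only [smul_eq_mul, mul_comm]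

theorem integrable_of_continuous_bdd {α : Type*} [TopologicalSpace α] [MeasurableSpace α]
    [OpensMeasurableSpace α] [SecondCountableTopologyEither α ℝ]
    (μ : Measure α) [IsFiniteMeasure μ] {F : α → ℝ}
    (hF : Continuous F) (C : ℝ) (hC : ∀ x, |F x| ≤ C) : Integrable F μ :=
  Integrable.of_bound hF.aestronglyMeasurable C (Filter.Eventually.of_forall hC)

/-- The part of `ψ(p)` multiplied by `p' cutH(p')` is handled by integration by parts; the rest is
supported on `{|p'| ≤ 1}`. -/
theorem abs_integral_le_unit {t : ℝ} {φ ψ : ℝ → ℝ} (h : IsTest t φ ψ) (p : Polynomial ℝ) :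
    |∫ x, ψ (p.eval x) ∂gm| ≤
      t * (16 * (p.natDegree + 2)) + gm.real {x | |p.derivative.eval x| ≤ 1} := by
  set P := p.derivative with hP
  have hcH := cutH_continuous
  have hcψ := h.continuous
  have hrem : ∀ x, |ψ (p.eval x) * (1 - P.eval x * cutH (P.eval x))| ≤
      Set.indicator {x : ℝ | |P.eval x| ≤ 1} (fun _ => (1 : ℝ)) x := fun x => by
    rw [abs_mul]
    have h1 := h.abs_deriv_le (p.eval x)
    have h2 := abs_one_sub_mul_cutH_le (P.eval x)
    have h3 : Set.indicator {u : ℝ | |u| ≤ 1} (fun _ => (1 : ℝ)) (P.eval x) =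
      Set.indicator {x : ℝ | |P.eval x| ≤ 1} (fun _ => (1 : ℝ)) x := by
        simp [Set.indicator_apply]
    rw [h3] at h2
    calc _ ≤ 1 * |1 - P.eval x * cutH (P.eval x)| := by gcongr
      _ ≤ _ := by rw [one_mul]; exact h2
  have hind1 : ∀ x, Set.indicator {x : ℝ | |P.eval x| ≤ 1} (fun _ => (1 : ℝ)) x ≤ 1 :=
    fun x => Set.indicator_le_self' (fun _ _ => zero_le_one) x
  have hmeas : MeasurableSet {x : ℝ | |P.eval x| ≤ 1} :=
    (isClosed_le (by fun_prop) continuous_const).measurableSet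
  have hi1 : Integrable (fun x => ψ (p.eval x)) gm :=
    integrable_of_continuous_bdd gm (by fun_prop) 1 fun x => h.abs_deriv_le _
  have hi2 : Integrable (fun x => ψ (p.eval x) * (1 - P.eval x * cutH (P.eval x))) gm :=
    integrable_of_continuous_bdd gm (by fun_prop) 1 fun x => (hrem x).trans (hind1 x)
  have hi3 : Integrable (fun x => ψ (p.eval x) * (P.eval x * cutH (P.eval x))) gm := by
    have := hi1.sub hi2
    refine this.congr (Filter.Eventually.of_forall fun x => ?_)
    simp only [Pi.sub_apply]
    ring
  have hsplit : ∫ x, ψ (p.eval x) ∂gm = (∫ x, ψ (p.eval x) * (P.eval x * cutH (P.eval x)) ∂gm)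
      + ∫ x, ψ (p.eval x) * (1 - P.eval x * cutH (P.eval x)) ∂gm := by
    rw [← integral_add hi3 hi2]
    congr 1
    funext x
    ring
  rw [hsplit]
  refine (abs_add_le _ _).trans (add_le_add ?_ ?_)
  · rw [integral_gm]
    have hi4 : Integrable
        (fun x => (ψ (p.eval x) * P.eval x) * (cutH (P.eval x) * gpdf x)) volume := by
      have h5 : Integrable (fun x => (gpdf x) • (ψ (p.eval x) * (P.eval x * cutH (P.eval x)))) := by
        have h6 := hi3
        rw [gm, gaussianReal_of_var_ne_zero 0 one_ne_zero,
          integrable_withDensity_iff_integrable_smul'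
            (measurable_gaussianPDF 0 1)
            (Filter.Eventually.of_forall fun _ => gaussianPDF_lt_top)] at h6
        simpa only [toReal_gaussianPDF] using h6
      refine h5.congr (Filter.Eventually.of_forall fun x => ?_)
      simp only [smul_eq_mul]
      ring
    have hlim := intervalIntegral_tendsto_integral hi4 Filter.tendsto_neg_atTop_atBot
      Filter.tendsto_id
    have heq : (fun x => ψ (p.eval x) * (P.eval x * cutH (P.eval x)) * gpdf x) =
        fun x => (ψ (p.eval x) * P.eval x) * (cutH (P.eval x) * gpdf x) := by
      funext x; ring
    rw [heq]
    refine le_of_tendsto hlim.abs ?_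
    filter_upwards [Filter.eventually_ge_atTop (0 : ℝ)] with N hN
    exact abs_integral_byParts_le h p (-N) N (by linarith)
  · refine (abs_integral_le_integral_abs).trans ?_
    calc ∫ x, |ψ (p.eval x) * (1 - P.eval x * cutH (P.eval x))| ∂gm
        ≤ ∫ x, Set.indicator {x : ℝ | |P.eval x| ≤ 1} (fun _ => (1 : ℝ)) x ∂gm :=
          integral_mono hi2.abs ((integrable_const (1 : ℝ)).indicator hmeas) hrem
      _ = gm.real {x | |P.eval x| ≤ 1} := by
          rw [integral_indicator hmeas]
          simp

theorem abs_integral_le_scaled {t : ℝ} {φ ψ : ℝ → ℝ} (h : IsTest t φ ψ) (p : Polynomial ℝ)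
    {δ : ℝ} (hδ : 0 < δ) :
    |∫ x, ψ (p.eval x) ∂gm| ≤
      t / δ * (16 * (p.natDegree + 2)) + gm.real {x | |p.derivative.eval x| ≤ δ} := by
  have h1 := abs_integral_le_unit (h.scale hδ) (Polynomial.C δ⁻¹ * p)
  have e1 : ∀ x, δ * (Polynomial.C δ⁻¹ * p).eval x = p.eval x := fun x => by
    rw [Polynomial.eval_mul, Polynomial.eval_C, mul_inv_cancel_left₀ hδ.ne']
  have e2 : (Polynomial.C δ⁻¹ * p).natDegree = p.natDegree :=
    Polynomial.natDegree_C_mul (inv_ne_zero hδ.ne')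
  have e3 : {x | |(Polynomial.C δ⁻¹ * p).derivative.eval x| ≤ 1} =
      {x | |p.derivative.eval x| ≤ δ} := by
    ext x
    simp only [Polynomial.derivative_C_mul, Polynomial.eval_mul, Polynomial.eval_C,
      Set.mem_ofPred_eq, abs_mul, abs_inv, abs_of_pos hδ]
    rw [inv_mul_le_iff₀ hδ, mul_one]
  simp only [e1, e2, e3] at h1
  exact h1

/-! ### A Remez type inequality and the one-variable estimate -/

/-- An interval around `x` has Gaussian measure at most its length divided by `1 + |x|`, up to a
constant. -/
theorem gm_Icc_le (x r : ℝ) (hr : 0 ≤ r) :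
    (1 + |x|) * gm.real (Set.Icc (x - r) (x + r)) ≤ 5 * r := by
  have hle : x - r ≤ x + r := by linarith
  have hc := gpdf_continuous
  have hreal : gm.real (Set.Icc (x - r) (x + r)) = ∫ y in (x - r)..(x + r), gpdf y := by
    rw [Measure.real, gm, gaussianReal_apply_eq_integral 0 one_ne_zero,
      ENNReal.toReal_ofReal (integral_nonneg fun y => gpdf_nonneg y),
      intervalIntegral.integral_of_le hle, integral_Icc_eq_integral_Ioc]
  have h1 : ∫ y in (x - r)..(x + r), gpdf y ≤ 1 := by
    rw [← hreal]; exact measureReal_le_one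
  have h2 : ∫ y in (x - r)..(x + r), (1 + |x|) * gpdf y ≤
      ∫ y in (x - r)..(x + r), (2 + r * gpdf y) := by
    refine intervalIntegral.integral_mono_on hle (Continuous.intervalIntegrable (by fun_prop) _ _)
      (Continuous.intervalIntegrable (by fun_prop) _ _) fun y hy => ?_
    have h3 : |x| ≤ |y| + r := by
      have h4 : |x - y| ≤ r := by
        rw [abs_le]; constructor <;> linarith [hy.1, hy.2]
      have h5 := abs_sub_abs_le_abs_sub x y
      linarith
    have h6 := gpdf_nonneg y
    have h7 := gpdf_le_one y
    have h8 := abs_mul_gpdf_le y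
    nlinarith
  rw [intervalIntegral.integral_const_mul, intervalIntegral.integral_add
    (Continuous.intervalIntegrable (by fun_prop) _ _)
    (Continuous.intervalIntegrable (by fun_prop) _ _), intervalIntegral.integral_const_mul,
    intervalIntegral.integral_const, smul_eq_mul] at h2
  rw [hreal]
  nlinarith

/-- Distinct points `x, y` of `T` are at distance at least `η (1 + |y|)`; the weight `1 + |y|`
is the one needed to bound the coefficients of the factors `(X - y) / (x - y)`. -/
def Separated (η : ℝ) (T : Finset ℝ) : Prop :=
  ∀ x ∈ T, ∀ y ∈ T, x ≠ y → η * (1 + |y|) ≤ |x - y|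

/-- Greedy choice: while fewer than `q + 1` points have been selected, the intervals around them do
not have enough Gaussian measure to cover `E`. -/
theorem exists_separated (E : Set ℝ) (q : ℕ) (η : ℝ) (hη : 0 < η) (hη2 : η ≤ 1 / 2)
    (hE : 10 * η * q < gm.real E) (k : ℕ) (hk : k ≤ q + 1) :
    ∃ T : Finset ℝ, T.card = k ∧ (↑T : Set ℝ) ⊆ E ∧ Separated η T := by
  induction k with
  | zero => exact ⟨∅, rfl, by simp, by simp [Separated]⟩
  | succ k ih =>
    obtain ⟨T, hcard, hTE, hsep⟩ := ih (by omega)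
    have hnot : ¬ E ⊆ ⋃ x ∈ T, Set.Icc (x - 2 * η * (1 + |x|)) (x + 2 * η * (1 + |x|)) := by
      intro hsub
      have h1 : gm.real E ≤ ∑ x ∈ T, gm.real
          (Set.Icc (x - 2 * η * (1 + |x|)) (x + 2 * η * (1 + |x|))) :=
        (measureReal_mono hsub (measure_ne_top _ _)).trans (measureReal_biUnion_finset_le _ _)
      have h2 : ∀ x ∈ T, gm.real
          (Set.Icc (x - 2 * η * (1 + |x|)) (x + 2 * η * (1 + |x|))) ≤ 10 * η := by
        intro x _
        have h3 := gm_Icc_le x (2 * η * (1 + |x|)) (by positivity)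
        have h4 : 0 < 1 + |x| := by positivity
        have h5 : (1 + |x|) * gm.real
          (Set.Icc (x - 2 * η * (1 + |x|)) (x + 2 * η * (1 + |x|))) ≤ (1 + |x|) * (10 * η) := by
            linarith
        exact le_of_mul_le_mul_left h5 h4
      have h6 := Finset.sum_le_sum h2
      rw [Finset.sum_const, hcard, nsmul_eq_mul] at h6
      have h7 : (k : ℝ) ≤ q := by exact_mod_cast (by omega : k ≤ q)
      nlinarith
    obtain ⟨y, hyE, hy⟩ := Set.not_subset.1 hnot
    have hfar : ∀ x ∈ T, 2 * η * (1 + |x|) < |x - y| := by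
      intro x hx
      by_contra! hcon
      apply hy
      rw [Set.mem_iUnion₂]
      refine ⟨x, hx, ?_⟩
      rw [abs_le] at hcon
      constructor <;> linarith [hcon.1, hcon.2]
    have hyT : y ∉ T := by
      intro h
      have h1 := hfar y h
      rw [sub_self, abs_zero] at h1
      have : 0 < 2 * η * (1 + |y|) := by positivity
      linarith
    refine ⟨insert y T, by rw [Finset.card_insert_of_notMem hyT, hcard], ?_, ?_⟩
    · rw [Finset.coe_insert]
      exact Set.insert_subset hyE hTE
    · intro a ha b hb hab
      rw [Finset.mem_insert] at ha hb
      rcases ha with rfl | ha <;> rcases hb with rfl | hb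
      · exact absurd rfl hab
      · have h1 := hfar b hb
        rw [abs_sub_comm] at h1
        have : 0 < η * (1 + |b|) := by positivity
        linarith
      · have h1 := hfar a ha
        have h2 : |b| ≤ |a| + |a - b| := by
          have := abs_sub_abs_le_abs_sub b a
          rw [abs_sub_comm b a] at this
          linarith
        have h3 := abs_nonneg (a - b)
        nlinarith
      · exact hsep a ha b hb hab

/-- Coefficients of a Lagrange basis polynomial with separated nodes. -/
theorem abs_coeff_basis_le (x η : ℝ) (hη : 0 < η) (S : Finset ℝ)
    (hS : ∀ y ∈ S, η * (1 + |y|) ≤ |x - y|) (k : ℕ) :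
    |(∏ y ∈ S, Lagrange.basisDivisor x y).coeff k| ≤ (η⁻¹) ^ S.card := by
  induction S using Finset.induction_on generalizing k with
  | empty =>
    rw [Finset.prod_empty, Finset.card_empty, pow_zero, Polynomial.coeff_one]
    split_ifs <;> simp
  | insert y S hy ih =>
    have ih' := ih fun z hz => hS z (Finset.mem_insert_of_mem hz)
    have hyη := hS y (Finset.mem_insert_self _ _)
    have hpos : 0 < |x - y| := lt_of_lt_of_le (by positivity) hyη
    rw [Finset.prod_insert hy, Finset.card_insert_of_notMem hy, Lagrange.basisDivisor, mul_assoc,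
      Polynomial.coeff_C_mul, sub_mul, Polynomial.coeff_sub, Polynomial.coeff_C_mul, abs_mul,
      abs_inv]
    set Q := ∏ y ∈ S, Lagrange.basisDivisor x y
    have h1 : |(Polynomial.X * Q).coeff k| ≤ (η⁻¹) ^ S.card := by
      cases k with
      | zero => rw [Polynomial.coeff_X_mul_zero, abs_zero]; positivity
      | succ k => rw [Polynomial.coeff_X_mul]; exact ih' k
    have h2 : |(Polynomial.X * Q).coeff k - y * Q.coeff k| ≤ (1 + |y|) * (η⁻¹) ^ S.card := by
      refine (abs_sub _ _).trans ?_
      rw [abs_mul, add_mul, one_mul]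
      exact add_le_add h1 (mul_le_mul_of_nonneg_left (ih' k) (abs_nonneg _))
    rw [inv_mul_le_iff₀ hpos]
    refine h2.trans ?_
    have h3 : (1 + |y|) ≤ |x - y| * η⁻¹ := by
      rw [← div_eq_mul_inv, le_div_iff₀ hη]; linarith
    calc (1 + |y|) * (η⁻¹) ^ S.card ≤ (|x - y| * η⁻¹) * (η⁻¹) ^ S.card := by gcongr
      _ = _ := by rw [pow_succ]; ring

/-- A Remez type inequality for coefficients: a polynomial that is small on a set of Gaussian
measure `α` has coefficients at most `C α^{-q}` times as large. -/
theorem remez (q : ℕ) : ∃ C : ℝ, 1 ≤ C ∧ ∀ (P : Polynomial ℝ), P.natDegree ≤ q →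
    ∀ (k : ℕ) (δ : ℝ), 0 ≤ δ → 0 < gm.real {x | |P.eval x| ≤ δ} →
      |P.coeff k| * gm.real {x | |P.eval x| ≤ δ} ^ q ≤ C * δ := by
  refine ⟨(q + 1) * (20 * (q + 1)) ^ q, ?_, ?_⟩
  · have h1 : (1 : ℝ) ≤ q + 1 := by linarith [(Nat.cast_nonneg q : (0 : ℝ) ≤ q)]
    exact one_le_mul_of_one_le_of_one_le h1 (one_le_pow₀ (by linarith))
  intro P hP k δ hδ hpos
  set E := {x | |P.eval x| ≤ δ} with hE
  set α := gm.real E with hα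
  have hα1 : α ≤ 1 := measureReal_le_one
  have hq0 : (0 : ℝ) ≤ q := Nat.cast_nonneg q
  set η := α / (20 * (q + 1)) with hη
  have hηpos : 0 < η := by positivity
  have hη2 : η ≤ 1 / 2 := by
    rw [hη, div_le_iff₀ (by positivity)]; nlinarith
  have hηα : η * (20 * (q + 1)) = α := div_mul_cancel₀ _ (by positivity)
  obtain ⟨T, hcard, hTE, hsep⟩ := exists_separated E q η hηpos hη2 (by nlinarith) (q + 1) le_rfl
  have hinterp : P = Lagrange.interpolate T id (fun x => P.eval (id x)) :=
    Lagrange.eq_interpolate (Set.injOn_id _) (by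
      rw [hcard]
      exact lt_of_le_of_lt Polynomial.degree_le_natDegree (by exact_mod_cast Nat.lt_succ_of_le hP))
  have hcoef : |P.coeff k| ≤ (q + 1) * (δ * (η⁻¹) ^ q) := by
    rw [hinterp, Lagrange.interpolate_apply, Polynomial.finsetSum_coeff]
    refine (Finset.abs_sum_le_sum_abs _ _).trans ?_
    have hb : ∀ x ∈ T, |(Polynomial.C (P.eval (id x)) * Lagrange.basis T id x).coeff k| ≤
        δ * (η⁻¹) ^ q := by
      intro x hx
      rw [Polynomial.coeff_C_mul, abs_mul]
      refine mul_le_mul (hTE hx) ?_ (abs_nonneg _) hδ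
      have := abs_coeff_basis_le x η hηpos (T.erase x) (fun y hy =>
        hsep x hx y (Finset.mem_of_mem_erase hy) (Finset.ne_of_mem_erase hy).symm) k
      rw [Finset.card_erase_of_mem hx, hcard, Nat.add_sub_cancel] at this
      exact this
    refine (Finset.sum_le_sum hb).trans ?_
    rw [Finset.sum_const, hcard, nsmul_eq_mul]
    push_cast
    exact le_rfl
  calc |P.coeff k| * α ^ q ≤ ((q + 1) * (δ * (η⁻¹) ^ q)) * α ^ q := by gcongr
    _ = (q + 1) * (20 * (q + 1)) ^ q * δ := by
      rw [← hηα, mul_pow, inv_pow]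
      have : η ^ q ≠ 0 := by positivity
      field_simp

/-- The one-variable estimate, with the scaling made explicit: `β` is a lower bound for a
non-constant coefficient and `s = (t / β)^{1/m}`. -/
theorem oneDim_bound (m : ℕ) (hm : 1 ≤ m) : ∃ C : ℝ, 1 ≤ C ∧ ∀ (p : Polynomial ℝ),
    p.natDegree ≤ m → ∀ k : ℕ, 1 ≤ k → ∀ β s : ℝ, 0 < β → 0 < s → β ≤ |p.coeff k| →
      ∀ φ ψ : ℝ → ℝ, IsTest (β * s ^ m) φ ψ → |∫ x, ψ (p.eval x) ∂gm| ≤ C * s := by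
  obtain ⟨q, rfl⟩ : ∃ q, m = q + 1 := ⟨m - 1, by omega⟩
  obtain ⟨C, hC1, hC⟩ := remez q
  have hC0 : 0 < C := by linarith
  refine ⟨2 * C * (16 * ((q + 1 : ℕ) + 2)) + 1, ?_, ?_⟩
  · have : (0 : ℝ) ≤ (16 * ((q + 1 : ℕ) + 2)) := by positivity
    nlinarith
  intro p hp k hk β s hβ hs hcoef φ ψ htest
  -- with this `δ` the inequality `remez` for `p'` forces the measure of `{|p'| ≤ δ}` to be at most `s`
  set δ := β * s ^ q / (2 * C) with hδ
  have hδ0 : 0 < δ := by positivity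
  have h1 := abs_integral_le_scaled htest p hδ0
  have h2 : β * s ^ (q + 1) / δ = 2 * C * s := by
    rw [hδ, pow_succ]
    field_simp
  rw [h2] at h1
  have h3 : gm.real {x | |p.derivative.eval x| ≤ δ} ≤ s := by
    rcases (measureReal_nonneg (μ := gm) (s := {x | |p.derivative.eval x| ≤ δ})).eq_or_lt
      with h0 | h0
    · rw [← h0]; exact hs.le
    have hd : p.derivative.natDegree ≤ q := p.natDegree_derivative_le.trans (by omega)
    have h4 := hC p.derivative hd (k - 1) δ hδ0.le h0
    have h5 : β ≤ |p.derivative.coeff (k - 1)| := by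
      rw [Polynomial.coeff_derivative, Nat.sub_add_cancel hk, abs_mul]
      have h6 : (1 : ℝ) ≤ |((k - 1 : ℕ) : ℝ) + 1| := by
        rw [abs_of_nonneg (by positivity)]
        linarith [(Nat.cast_nonneg (k - 1) : (0 : ℝ) ≤ ((k - 1 : ℕ) : ℝ))]
      nlinarith [abs_nonneg (p.coeff k)]
    have h7 : β * gm.real {x | |p.derivative.eval x| ≤ δ} ^ q ≤ β * (s ^ q / 2) := by
      calc _ ≤ |p.derivative.coeff (k - 1)| * gm.real {x | |p.derivative.eval x| ≤ δ} ^ q := by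
            gcongr
        _ ≤ C * δ := h4
        _ = β * (s ^ q / 2) := by rw [hδ]; field_simp
    have h8 := le_of_mul_le_mul_left h7 hβ
    by_contra! hcon
    have h9 : s ^ q ≤ gm.real {x | |p.derivative.eval x| ≤ δ} ^ q :=
      pow_le_pow_left₀ hs.le hcon.le q
    have h10 : 0 < s ^ q := by positivity
    linarith
  have h4 : (p.natDegree : ℝ) ≤ ((q + 1 : ℕ) : ℝ) := by exact_mod_cast hp
  calc _ ≤ 2 * C * s * (16 * (p.natDegree + 2)) + s := h1.trans (by gcongr)
    _ ≤ 2 * C * s * (16 * ((q + 1 : ℕ) + 2)) + s := by gcongr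
    _ = _ := by ring

/-! ### Resampling a coordinate; slices of polynomials -/

instance stdGaussian_isProb (n : ℕ) : IsProbabilityMeasure (stdGaussian n) := by
  unfold _root_.stdGaussian; infer_instance

/-- Replacing one coordinate by an independent standard Gaussian preserves the law. -/
theorem resample_measurePreserving {n : ℕ} (i : Fin n) :
    MeasurePreserving (fun z : (Fin n → ℝ) × ℝ => Function.update z.1 i z.2)
      ((stdGaussian n).prod gm) (stdGaussian n) := by
  have hmeas : Measurable fun z : (Fin n → ℝ) × ℝ => Function.update z.1 i z.2 := by
    rw [measurable_pi_iff]
    intro l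
    by_cases h : l = i
    · subst h
      simpa using measurable_snd
    · simp only [Function.update_of_ne h]
      exact (measurable_pi_apply l).comp measurable_fst
  refine ⟨hmeas, ?_⟩
  symm
  refine Measure.pi_eq fun s hs => ?_
  rw [Measure.map_apply hmeas (MeasurableSet.univ_pi hs)]
  have hpre : (fun z : (Fin n → ℝ) × ℝ => Function.update z.1 i z.2) ⁻¹' (Set.univ.pi s) =
      (Set.univ.pi (Function.update s i Set.univ)) ×ˢ s i := by
    ext ⟨x, y⟩
    simp only [Set.mem_preimage, Set.mem_univ_pi, Set.mem_prod]
    constructor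
    · intro h
      refine ⟨fun l => ?_, by simpa using h i⟩
      by_cases hl : l = i
      · subst hl; simp
      · simpa [Function.update_of_ne hl] using h l
    · rintro ⟨h1, h2⟩ l
      by_cases hl : l = i
      · subst hl; simpa using h2
      · simpa [Function.update_of_ne hl] using h1 l
  rw [hpre, Measure.prod_prod, _root_.stdGaussian, Measure.pi_pi,
    ← Finset.mul_prod_erase Finset.univ _ (Finset.mem_univ i),
    ← Finset.mul_prod_erase Finset.univ (fun l => gaussianReal 0 1 (s l)) (Finset.mem_univ i)]
  simp only [Function.update_self, measure_univ, one_mul]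
  rw [mul_comm]
  congr 1
  refine Finset.prod_congr rfl fun l hl => ?_
  rw [Function.update_of_ne (Finset.ne_of_mem_erase hl)]

theorem integral_resample {n : ℕ} (i : Fin n) {F : (Fin n → ℝ) → ℝ}
    (hF : Integrable F (stdGaussian n)) :
    ∫ x, F x ∂stdGaussian n = ∫ x, (∫ y, F (Function.update x i y) ∂gm) ∂stdGaussian n ∧
    Integrable (fun x => ∫ y, F (Function.update x i y) ∂gm) (stdGaussian n) := by
  have hmp := resample_measurePreserving i
  have hF' : Integrable (fun z : (Fin n → ℝ) × ℝ => F (Function.update z.1 i z.2))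
      ((stdGaussian n).prod gm) := hmp.integrable_comp_of_integrable hF
  refine ⟨?_, hF'.integral_prod_left⟩
  rw [← integral_prod _ hF']
  conv_lhs => rw [← hmp.map_eq]
  rw [integral_map hmp.measurable.aemeasurable]
  rw [hmp.map_eq]
  exact hF.aestronglyMeasurable

open MvPolynomial in
/-- The one-variable polynomial obtained from `f` by freezing all variables but the `i`-th at the
values prescribed by `x`. -/
noncomputable def slice {n : ℕ} (i : Fin n) (x : Fin n → ℝ) (f : MvPolynomial (Fin n) ℝ) :
    Polynomial ℝ :=
  aeval (Function.update (fun l => Polynomial.C (x l)) i Polynomial.X) f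

open MvPolynomial in
theorem eval_slice {n : ℕ} (i : Fin n) (x : Fin n → ℝ) (f : MvPolynomial (Fin n) ℝ) (y : ℝ) :
    (slice i x f).eval y = eval (Function.update x i y) f := by
  induction f using MvPolynomial.induction_on with
  | C a => simp [slice]
  | add p q hp hq => simp only [slice, map_add, Polynomial.eval_add] at *; rw [hp, hq]
  | mul_X p l hp =>
    simp only [slice, map_mul, Polynomial.eval_mul, aeval_X, eval_X] at *
    rw [hp]
    by_cases h : l = i
    · subst h; simp
    · simp [Function.update_of_ne h]

open MvPolynomial in
theorem derivative_slice {n : ℕ} (i : Fin n) (x : Fin n → ℝ) (f : MvPolynomial (Fin n) ℝ) :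
    (slice i x f).derivative = slice i x (pderiv i f) := by
  induction f using MvPolynomial.induction_on with
  | C a => simp [slice]
  | add p q hp hq => simp only [slice, map_add] at *; rw [hp, hq]
  | mul_X p l hp =>
    simp only [slice, map_mul, Polynomial.derivative_mul, aeval_X, Derivation.leibniz, map_add,
      smul_eq_mul] at *
    rw [hp]
    by_cases h : l = i
    · subst h; simp; ring
    · rw [pderiv_X_of_ne h]
      simp [Function.update_of_ne h]
      ring

open MvPolynomial in
/-- The coefficient of `xᵢ^k` in `f`, as a polynomial in the remaining variables. -/
noncomputable def coeffPoly {n : ℕ} (i : Fin n) (k : ℕ) (f : MvPolynomial (Fin n) ℝ) :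
    MvPolynomial (Fin n) ℝ :=
  ∑ e ∈ f.support with e i = k, monomial (e.erase i) (coeff e f)

open MvPolynomial in
theorem slice_eq_sum {n : ℕ} (i : Fin n) (x : Fin n → ℝ) (f : MvPolynomial (Fin n) ℝ) :
    slice i x f = ∑ e ∈ f.support,
      Polynomial.monomial (e i) (eval x (monomial (e.erase i) (coeff e f))) := by
  conv_lhs => rw [f.as_sum]
  rw [slice, map_sum]
  refine Finset.sum_congr rfl fun e _ => ?_
  rw [aeval_monomial, eval_monomial, Finsupp.prod_fintype _ _ (by simp),
    Finsupp.prod_fintype _ _ (by simp), ← Finset.mul_prod_erase Finset.univ _ (Finset.mem_univ i),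
    ← Finset.mul_prod_erase Finset.univ (fun l => x l ^ (e.erase i) l) (Finset.mem_univ i),
    Function.update_self, Finsupp.erase_same, pow_zero, one_mul, ← Polynomial.C_mul_X_pow_eq_monomial,
    Polynomial.C_mul, map_prod]
  have : ∏ l ∈ Finset.univ.erase i,
      (Function.update (fun l => Polynomial.C (x l)) i Polynomial.X l) ^ e l =
      ∏ l ∈ Finset.univ.erase i, Polynomial.C (x l ^ (e.erase i) l) :=
    Finset.prod_congr rfl fun l hl => by
      rw [Function.update_of_ne (Finset.ne_of_mem_erase hl),
        Finsupp.erase_ne (Finset.ne_of_mem_erase hl), Polynomial.C_pow]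
  rw [this, Polynomial.algebraMap_eq]
  ring

open MvPolynomial in
theorem coeff_slice {n : ℕ} (i : Fin n) (x : Fin n → ℝ) (f : MvPolynomial (Fin n) ℝ) (k : ℕ) :
    (slice i x f).coeff k = eval x (coeffPoly i k f) := by
  rw [slice_eq_sum, Polynomial.finsetSum_coeff, coeffPoly, map_sum, Finset.sum_filter]
  refine Finset.sum_congr rfl fun e _ => ?_
  rw [Polynomial.coeff_monomial]

open MvPolynomial in
/-- The class on which the induction runs: the coefficient of `f` at `j` is at least one in
absolute value, no monomial of `f` has degree larger than that of `j`, and every exponent occurring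
in `f` is at most `m`.  It is stable under partial derivatives and under taking the coefficient
of a power of one variable. -/
structure HasTarget {n : ℕ} (m : ℕ) (f : MvPolynomial (Fin n) ℝ) (j : Fin n →₀ ℕ) : Prop where
  one_le_coeff : 1 ≤ |coeff j f|
  degree_le : ∀ e ∈ f.support, e.degree ≤ j.degree
  apply_le : ∀ e ∈ f.support, ∀ i, e i ≤ m

open MvPolynomial in
theorem HasTarget.mem_support {n m : ℕ} {f : MvPolynomial (Fin n) ℝ} {j : Fin n →₀ ℕ}
    (h : HasTarget m f j) : j ∈ f.support := by
  rw [mem_support_iff]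
  intro h0
  have := h.one_le_coeff
  rw [h0, abs_zero] at this
  linarith

theorem HasTarget.natDegree_slice_le {n m : ℕ} {f : MvPolynomial (Fin n) ℝ} {j : Fin n →₀ ℕ}
    (h : HasTarget m f j) (i : Fin n) (x : Fin n → ℝ) : (slice i x f).natDegree ≤ m := by
  rw [slice_eq_sum]
  refine Polynomial.natDegree_sum_le_of_forall_le _ _ fun e he => ?_
  exact (Polynomial.natDegree_monomial_le _).trans (h.apply_le e he i)

theorem degree_erase_add {n : ℕ} (e : Fin n →₀ ℕ) (i : Fin n) :
    (e.erase i).degree + e i = e.degree := by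
  conv_rhs => rw [← Finsupp.erase_add_single i e]
  rw [map_add, Finsupp.degree_single]

open MvPolynomial in
theorem HasTarget.coeffPoly {n m : ℕ} {f : MvPolynomial (Fin n) ℝ} {j : Fin n →₀ ℕ}
    (h : HasTarget m f j) (i : Fin n) : HasTarget m (coeffPoly i (j i) f) (j.erase i) := by
  have hsupp : ∀ e' ∈ (_root_.coeffPoly i (j i) f).support,
      ∃ e ∈ f.support, e i = j i ∧ e.erase i = e' := by
    intro e' he'
    by_contra! hcon
    rw [mem_support_iff] at he'
    apply he'
    rw [_root_.coeffPoly, coeff_sum]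
    refine Finset.sum_eq_zero fun e he => ?_
    rw [Finset.mem_filter] at he
    rw [coeff_monomial, if_neg (hcon e he.1 he.2)]
  refine ⟨?_, fun e' he' => ?_, fun e' he' l => ?_⟩
  · have : coeff (j.erase i) (_root_.coeffPoly i (j i) f) = coeff j f := by
      rw [_root_.coeffPoly, coeff_sum, Finset.sum_eq_single j]
      · rw [coeff_monomial, if_pos rfl]
      · intro e he hne
        rw [coeff_monomial, if_neg]
        intro heq
        apply hne
        rw [Finset.mem_filter] at he
        rw [← Finsupp.erase_add_single i e, ← Finsupp.erase_add_single i j, heq, he.2]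
      · intro hj
        exact absurd (show j ∈ f.support.filter (fun e => e i = j i) from
          Finset.mem_filter.2 ⟨h.mem_support, rfl⟩) hj
    rw [this]
    exact h.one_le_coeff
  · obtain ⟨e, he, hei, rfl⟩ := hsupp e' he'
    have h1 := h.degree_le e he
    rw [← degree_erase_add e i, ← degree_erase_add j i] at h1
    omega
  · obtain ⟨e, he, hei, rfl⟩ := hsupp e' he'
    have h1 := h.apply_le e he l
    by_cases hl : l = i
    · subst hl; simp
    · rwa [Finsupp.erase_ne hl]

open MvPolynomial in
theorem HasTarget.pderiv {n m : ℕ} {f : MvPolynomial (Fin n) ℝ} {j : Fin n →₀ ℕ}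
    (h : HasTarget m f j) (i : Fin n) (hi : j i ≠ 0) :
    HasTarget m (pderiv i f) (j - Finsupp.single i 1) := by
  have hle : Finsupp.single i 1 ≤ j := by
    rw [Finsupp.single_le_iff]; omega
  have hj : j - Finsupp.single i 1 + Finsupp.single i 1 = j := tsub_add_cancel_of_le hle
  have hsupp : ∀ e ∈ (MvPolynomial.pderiv i f).support, e + Finsupp.single i 1 ∈ f.support := by
    intro e he
    rw [mem_support_iff, coeff_pderiv] at he
    rw [mem_support_iff]
    intro h0
    apply he
    rw [h0]; simp
  refine ⟨?_, fun e he => ?_, fun e he l => ?_⟩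
  · rw [coeff_pderiv, hj, abs_mul]
    have h1 := h.one_le_coeff
    generalize (j - Finsupp.single i 1 : Fin n →₀ ℕ) i = r
    have h2 : (1 : ℝ) ≤ |(r : ℝ) + 1| := by
      rw [abs_of_nonneg (by positivity)]
      linarith [(Nat.cast_nonneg r : (0 : ℝ) ≤ (r : ℝ))]
    nlinarith
  · have h1 := h.degree_le _ (hsupp e he)
    rw [← hj, map_add, map_add] at h1
    omega
  · have h1 := h.apply_le _ (hsupp e he) l
    rw [Finsupp.add_apply] at h1
    omega

/-! ### Smoothness estimates in several variables -/

theorem IsTest.mono {t t' : ℝ} {φ ψ : ℝ → ℝ} (h : IsTest t φ ψ) (ht : t ≤ t') : IsTest t' φ ψ :=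
  ⟨h.hasDerivAt, h.continuous, fun u => (h.abs_le u).trans ht, h.abs_deriv_le⟩

theorem measurableSet_sublevel {n : ℕ} (f : MvPolynomial (Fin n) ℝ) (δ : ℝ) :
    MeasurableSet {x : Fin n → ℝ | |MvPolynomial.eval x f| ≤ δ} :=
  (isClosed_le (MvPolynomial.continuous_eval f).abs continuous_const).measurableSet

theorem IsTest.integrable {n : ℕ} {t : ℝ} {φ ψ : ℝ → ℝ} (h : IsTest t φ ψ)
    (f : MvPolynomial (Fin n) ℝ) :
    Integrable (fun x => ψ (MvPolynomial.eval x f)) (stdGaussian n) :=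
  integrable_of_continuous_bdd _ (h.continuous.comp (MvPolynomial.continuous_eval f)) 1
    fun _ => h.abs_deriv_le _

theorem IsTest.abs_integral_le_one {n : ℕ} {t : ℝ} {φ ψ : ℝ → ℝ} (h : IsTest t φ ψ)
    (f : MvPolynomial (Fin n) ℝ) :
    |∫ x, ψ (MvPolynomial.eval x f) ∂stdGaussian n| ≤ 1 := by
  refine abs_integral_le_integral_abs.trans ?_
  refine (integral_mono (h.integrable f).abs (integrable_const (1 : ℝ))
    fun x => h.abs_deriv_le _).trans ?_
  simp

/-- Small ball probabilities are controlled by the integral of the derivative of the arctangent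
test function. -/
theorem sublevel_le_integral {n : ℕ} (f : MvPolynomial (Fin n) ℝ) {δ : ℝ} (hδ : 0 < δ) :
    (stdGaussian n).real {x | |MvPolynomial.eval x f| ≤ δ} ≤
      2 * |∫ x, (1 + (MvPolynomial.eval x f / δ) ^ 2)⁻¹ ∂stdGaussian n| := by
  have hi := (isTest_arctan hδ).integrable f
  have h1 : (stdGaussian n).real {x | |MvPolynomial.eval x f| ≤ δ} =
      ∫ x, Set.indicator {x : Fin n → ℝ | |MvPolynomial.eval x f| ≤ δ} (fun _ => (1 : ℝ)) x
        ∂stdGaussian n := by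
    rw [integral_indicator (measurableSet_sublevel f δ)]; simp
  rw [h1]
  refine (integral_mono ((integrable_const (1 : ℝ)).indicator (measurableSet_sublevel f δ))
    (hi.const_mul 2) fun x => ?_).trans ?_
  · have := half_indicator_le hδ (MvPolynomial.eval x f)
    simpa [Set.indicator_apply] using this
  · rw [integral_const_mul]
    exact mul_le_mul_of_nonneg_left (le_abs_self _) (by norm_num)

/-- The one-variable inequality in the `i`-th variable, averaged over the other ones. -/
theorem HasTarget.abs_integral_le {n m : ℕ} {f : MvPolynomial (Fin n) ℝ} {j : Fin n →₀ ℕ}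
    (hf : HasTarget m f j) (i : Fin n) {t : ℝ} {φ ψ : ℝ → ℝ} (h : IsTest t φ ψ)
    {δ : ℝ} (hδ : 0 < δ) :
    |∫ x, ψ (MvPolynomial.eval x f) ∂stdGaussian n| ≤ t / δ * (16 * (m + 2)) +
      (stdGaussian n).real {x | |MvPolynomial.eval x (MvPolynomial.pderiv i f)| ≤ δ} := by
  have ht : 0 ≤ t := (abs_nonneg _).trans (h.abs_le 0)
  set g := MvPolynomial.pderiv i f with hg
  have hind : Integrable (fun x => Set.indicator
      {x : Fin n → ℝ | |MvPolynomial.eval x g| ≤ δ} (fun _ => (1 : ℝ)) x) (stdGaussian n) :=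
    (integrable_const (1 : ℝ)).indicator (measurableSet_sublevel g δ)
  obtain ⟨e1, i1⟩ := integral_resample i (h.integrable f)
  obtain ⟨e2, i2⟩ := integral_resample i hind
  have e3 : (stdGaussian n).real {x | |MvPolynomial.eval x g| ≤ δ} =
      ∫ x, Set.indicator {x : Fin n → ℝ | |MvPolynomial.eval x g| ≤ δ} (fun _ => (1 : ℝ)) x
        ∂stdGaussian n := by
    rw [integral_indicator (measurableSet_sublevel g δ)]; simp
  rw [e1, e3, e2]
  refine abs_integral_le_integral_abs.trans ?_
  have hpt : ∀ x : Fin n → ℝ, |∫ y, ψ (MvPolynomial.eval (Function.update x i y) f) ∂gm| ≤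
      t / δ * (16 * (m + 2)) + ∫ y, Set.indicator {x : Fin n → ℝ | |MvPolynomial.eval x g| ≤ δ}
        (fun _ => (1 : ℝ)) (Function.update x i y) ∂gm := by
    intro x
    have h1 := abs_integral_le_scaled h (slice i x f) hδ
    rw [derivative_slice, ← hg] at h1
    simp only [eval_slice] at h1
    have h2 : ∫ y, Set.indicator {x : Fin n → ℝ | |MvPolynomial.eval x g| ≤ δ}
        (fun _ => (1 : ℝ)) (Function.update x i y) ∂gm =
        gm.real {y | |MvPolynomial.eval (Function.update x i y) g| ≤ δ} := by
      have hm : MeasurableSet {y : ℝ | |MvPolynomial.eval (Function.update x i y) g| ≤ δ} := by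
        simp only [← eval_slice]
        exact (isClosed_le (by fun_prop) continuous_const).measurableSet
      have : (fun y => Set.indicator {x : Fin n → ℝ | |MvPolynomial.eval x g| ≤ δ}
        (fun _ => (1 : ℝ)) (Function.update x i y)) =
        Set.indicator {y : ℝ | |MvPolynomial.eval (Function.update x i y) g| ≤ δ}
          (fun _ => (1 : ℝ)) := by
        funext y; simp [Set.indicator_apply]
      rw [this, integral_indicator hm]; simp
    rw [h2]
    refine h1.trans (add_le_add_left ?_ _)
    have h3 : ((slice i x f).natDegree : ℝ) ≤ m := by exact_mod_cast hf.natDegree_slice_le i x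
    gcongr
  refine (integral_mono i1.abs ((integrable_const _).add i2) hpt).trans ?_
  rw [integral_add' (integrable_const _) i2]
  simp

/-- Small ball estimates in degree `D` give smoothness in degree `D + 1`, by differentiating once. -/
theorem smooth_of_anti (m D : ℕ) (C : ℝ)
    (hanti : ∀ (n : ℕ) (f : MvPolynomial (Fin n) ℝ) (j : Fin n →₀ ℕ), HasTarget m f j →
      j.degree = D → ∀ s : ℝ, 0 < s →
        (stdGaussian n).real {x | |MvPolynomial.eval x f| ≤ s ^ D / 2} ≤ C * s)
    (n : ℕ) (f : MvPolynomial (Fin n) ℝ) (j : Fin n →₀ ℕ) (hf : HasTarget m f j)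
    (hj : j.degree = D + 1) (s : ℝ) (hs : 0 < s) (φ ψ : ℝ → ℝ) (h : IsTest (s ^ (D + 1)) φ ψ) :
    |∫ x, ψ (MvPolynomial.eval x f) ∂stdGaussian n| ≤ (2 * (16 * (m + 2)) + C) * s := by
  obtain ⟨i, hi⟩ : ∃ i, j i ≠ 0 := by
    by_contra! hcon
    have : j = 0 := Finsupp.ext hcon
    rw [this, map_zero] at hj
    omega
  have hd : (j - Finsupp.single i 1).degree = D := by
    have h1 : j - Finsupp.single i 1 + Finsupp.single i 1 = j :=
      tsub_add_cancel_of_le (Finsupp.single_le_iff.2 (by omega))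
    have h2 := congrArg Finsupp.degree h1
    rw [map_add, Finsupp.degree_single] at h2
    omega
  have h1 := hf.abs_integral_le i h (δ := s ^ D / 2) (by positivity)
  have h2 := hanti n _ _ (hf.pderiv i hi) hd s hs
  have h3 : s ^ (D + 1) / (s ^ D / 2) = 2 * s := by
    rw [pow_succ]; field_simp
  rw [h3] at h1
  calc _ ≤ _ := h1
    _ ≤ 2 * s * (16 * (m + 2)) + C * s := by gcongr
    _ = _ := by ring

/-- Small ball estimate with exponent `1 / D`.  For `D = 0` the polynomial is a constant of absolute
value at least one, which explains the factor `1 / 2`: the sublevel set is then empty. -/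
theorem anti_nolog (m D : ℕ) : ∃ C : ℝ, 0 ≤ C ∧
    ∀ (n : ℕ) (f : MvPolynomial (Fin n) ℝ) (j : Fin n →₀ ℕ), HasTarget m f j →
      j.degree = D → ∀ s : ℝ, 0 < s →
        (stdGaussian n).real {x | |MvPolynomial.eval x f| ≤ s ^ D / 2} ≤ C * s := by
  induction D with
  | zero =>
    refine ⟨0, le_rfl, fun n f j hf hj s hs => ?_⟩
    rw [Finsupp.degree_eq_zero_iff] at hj
    subst hj
    have hconst : f = MvPolynomial.C (MvPolynomial.coeff 0 f) := by
      ext e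
      rw [MvPolynomial.coeff_C]
      split_ifs with he
      · rw [he]
      · by_contra hne
        have h1 := hf.degree_le e (MvPolynomial.mem_support_iff.2 hne)
        rw [map_zero, Nat.le_zero, Finsupp.degree_eq_zero_iff] at h1
        exact he h1.symm
    have hempty : {x : Fin n → ℝ | |MvPolynomial.eval x f| ≤ s ^ 0 / 2} = ∅ := by
      rw [Set.eq_empty_iff_forall_notMem]
      intro x hx
      have h1 := hf.one_le_coeff
      have h2 : |MvPolynomial.eval x f| ≤ s ^ 0 / 2 := hx
      rw [hconst, MvPolynomial.eval_C, pow_zero] at h2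
      linarith
    rw [hempty, measureReal_empty, zero_mul]
  | succ D ih =>
    obtain ⟨C, hC0, hC⟩ := ih
    refine ⟨2 * (2 * (16 * (m + 2)) + C), by positivity, fun n f j hf hj s hs => ?_⟩
    have hδ : 0 < s ^ (D + 1) / 2 := by positivity
    have h1 := sublevel_le_integral f hδ
    have h2 := smooth_of_anti m D C hC n f j hf hj s hs _ _
      ((isTest_arctan hδ).mono (by linarith))
    linarith

/-- Smoothness of order `1 / D` without logarithms, used when `D ≤ m`. -/
theorem smooth_nolog (m D : ℕ) (hD : 1 ≤ D) : ∃ C : ℝ, 1 ≤ C ∧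
    ∀ (n : ℕ) (f : MvPolynomial (Fin n) ℝ) (j : Fin n →₀ ℕ), HasTarget m f j →
      j.degree = D → ∀ s : ℝ, 0 < s → ∀ φ ψ : ℝ → ℝ, IsTest (s ^ D) φ ψ →
        |∫ x, ψ (MvPolynomial.eval x f) ∂stdGaussian n| ≤ C * s := by
  obtain ⟨D, rfl⟩ : ∃ q, D = q + 1 := ⟨D - 1, by omega⟩
  obtain ⟨C, hC0, hC⟩ := anti_nolog m D
  refine ⟨2 * (16 * (m + 2)) + C, ?_, fun n f j hf hj s hs φ ψ h =>
    smooth_of_anti m D C hC n f j hf hj s hs φ ψ h⟩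
  have : (0 : ℝ) ≤ m := Nat.cast_nonneg m
  linarith

/-- The bound `K s / |coeff_k p|^{1/m}`, cut off at `1` and at `s`, written as a sum over the levels
`(s e^i)^m` of `|coeff_k p|` so that it can be integrated level by level.  The hypothesis `hK` is
the conclusion of `oneDim_bound`. -/
theorem slice_pointwise (m : ℕ) (K : ℝ) (hK1 : 1 ≤ K)
    (hK : ∀ (p : Polynomial ℝ),
      p.natDegree ≤ m → ∀ k : ℕ, 1 ≤ k → ∀ β s : ℝ, 0 < β → 0 < s → β ≤ |p.coeff k| →
      ∀ φ ψ : ℝ → ℝ, IsTest (β * s ^ m) φ ψ → |∫ x, ψ (p.eval x) ∂gm| ≤ K * s)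
    (p : Polynomial ℝ) (hp : p.natDegree ≤ m) (k : ℕ) (hk : 1 ≤ k) (s : ℝ) (hs : 0 < s)
    (φ ψ : ℝ → ℝ) (h : IsTest (s ^ m) φ ψ) (N : ℕ) (hN : 1 ≤ s * Real.exp N) :
    |∫ x, ψ (p.eval x) ∂gm| ≤ K * ((∑ i ∈ Finset.range (N + 1), Real.exp (1 - i) *
      (if |p.coeff k| ≤ (s * Real.exp i) ^ m then 1 else 0)) + s) := by
  have hnn : ∀ i ∈ Finset.range (N + 1), 0 ≤ Real.exp (1 - i) *
      (if |p.coeff k| ≤ (s * Real.exp i) ^ m then (1 : ℝ) else 0) := fun i _ =>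
    mul_nonneg (Real.exp_pos _).le (by split_ifs <;> norm_num)
  by_cases hex : ∃ i : ℕ, i ≤ N ∧ |p.coeff k| ≤ (s * Real.exp i) ^ m
  · classical
    set r := Nat.find hex with hr
    obtain ⟨hrN, hrle⟩ := Nat.find_spec hex
    have hsum : Real.exp (1 - r) ≤ ∑ i ∈ Finset.range (N + 1), Real.exp (1 - i) *
        (if |p.coeff k| ≤ (s * Real.exp i) ^ m then (1 : ℝ) else 0) := by
      have := Finset.single_le_sum hnn (Finset.mem_range.2 (Nat.lt_succ_of_le hrN))
      rwa [if_pos hrle, mul_one] at this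
    have hmain : |∫ x, ψ (p.eval x) ∂gm| ≤ K * Real.exp (1 - r) := by
      rcases Nat.eq_zero_or_eq_succ_pred r with h0 | h0
      · have h1 : |∫ x, ψ (p.eval x) ∂gm| ≤ 1 := by
          refine abs_integral_le_integral_abs.trans ?_
          have hc := h.continuous
          refine (integral_mono (integrable_of_continuous_bdd gm
            (F := fun x => ψ (p.eval x)) (by fun_prop) 1
            fun x => h.abs_deriv_le _).abs (integrable_const (1 : ℝ))
            fun x => h.abs_deriv_le _).trans ?_
          simp
        rw [h0, Nat.cast_zero, sub_zero]
        have h2 : 1 ≤ Real.exp 1 := Real.one_le_exp (by norm_num)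
        nlinarith
      · set r' := r.pred with hr'
        have hlt : ¬ (r' ≤ N ∧ |p.coeff k| ≤ (s * Real.exp r') ^ m) :=
          Nat.find_min hex (by omega)
        have hgt : (s * Real.exp r') ^ m < |p.coeff k| := by
          by_contra! hcon
          exact hlt ⟨by omega, hcon⟩
        have h1 := hK p hp k hk ((s * Real.exp r') ^ m) (Real.exp (-r')) (by positivity)
          (Real.exp_pos _) hgt.le φ ψ (by
            rw [← mul_pow, mul_assoc, ← Real.exp_add, add_neg_cancel, Real.exp_zero, mul_one]
            exact h)
        have h2 : (1 : ℝ) - r = -r' := by rw [h0]; push_cast; ring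
        rw [h2]
        exact h1
    refine hmain.trans (mul_le_mul_of_nonneg_left ?_ (by linarith))
    linarith
  · push Not at hex
    have h1 := hex N le_rfl
    have h2 : 1 ≤ |p.coeff k| := (one_le_pow₀ hN).trans h1.le
    have h3 := hK p hp k hk 1 s one_pos hs h2 φ ψ (by rwa [one_mul])
    refine h3.trans (mul_le_mul_of_nonneg_left ?_ (by linarith))
    linarith [Finset.sum_nonneg hnn]

/-- Removal of the variable `xᵢ`: a bound for the coefficient of `xᵢ^{jᵢ}`, whose target `j.erase i`
has degree `D'`, gives a bound for `f` with one more logarithm. -/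
theorem smooth_step (m D : ℕ) (hm : 1 ≤ m) (C' : ℝ) (hC'1 : 1 ≤ C') (D' : ℕ)
    (hC' : ∀ (n : ℕ) (f : MvPolynomial (Fin n) ℝ) (j : Fin n →₀ ℕ), HasTarget m f j →
      j.degree = D' → ∀ s : ℝ, 0 < s → ∀ φ ψ : ℝ → ℝ, IsTest (s ^ m) φ ψ →
        |∫ x, ψ (MvPolynomial.eval x f) ∂stdGaussian n| ≤
          C' * s * (1 + |Real.log s|) ^ (D - 1 - m))
    (hDm : m < D)
    (K : ℝ) (hK1 : 1 ≤ K)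
    (hK : ∀ (p : Polynomial ℝ),
      p.natDegree ≤ m → ∀ k : ℕ, 1 ≤ k → ∀ β s : ℝ, 0 < β → 0 < s → β ≤ |p.coeff k| →
      ∀ φ ψ : ℝ → ℝ, IsTest (β * s ^ m) φ ψ → |∫ x, ψ (p.eval x) ∂gm| ≤ K * s)
    (n : ℕ) (f : MvPolynomial (Fin n) ℝ) (j : Fin n →₀ ℕ) (hf : HasTarget m f j)
    (i : Fin n) (hi : j i ≠ 0) (hD' : (j.erase i).degree = D')
    (s : ℝ) (hs : 0 < s) (hs1 : s < 1) (φ ψ : ℝ → ℝ) (h : IsTest (s ^ m) φ ψ) :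
    |∫ x, ψ (MvPolynomial.eval x f) ∂stdGaussian n| ≤
      K * (24 * C' * 3 ^ (D - 1 - m) + 1) * s * (1 + |Real.log s|) ^ (D - m) := by
  set L := |Real.log s| with hL
  have hL0 : 0 ≤ L := abs_nonneg _
  have hlog : Real.log s = -L := by
    rw [hL, abs_of_neg (Real.log_neg hs hs1), neg_neg]
  set l := D - 1 - m with hl
  have hlD : D - m = l + 1 := by omega
  set N := ⌈L⌉₊ with hN
  have hN1 : L ≤ N := Nat.le_ceil L
  have hN2 : (N : ℝ) < L + 1 := Nat.ceil_lt_add_one hL0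
  have hsN : 1 ≤ s * Real.exp N := by
    rw [← Real.exp_log hs, ← Real.exp_add, hlog]
    exact Real.one_le_exp (by linarith)
  set g := coeffPoly i (j i) f with hg
  have hgt := hf.coeffPoly i
  have hanti : ∀ r ∈ Finset.range (N + 1),
      (stdGaussian n).real {x | |MvPolynomial.eval x g| ≤ (s * Real.exp r) ^ m} ≤
        4 * C' * 3 ^ l * s * Real.exp r * (1 + L) ^ l := by
    intro r hr
    have hrN : (r : ℝ) ≤ N := by
      exact_mod_cast Nat.lt_succ_iff.1 (Finset.mem_range.1 hr)
    have hr0 : (0 : ℝ) ≤ r := Nat.cast_nonneg r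
    set σ := s * Real.exp r with hσ
    have hσ0 : 0 < σ := by positivity
    have h1 := sublevel_le_integral g (pow_pos hσ0 m)
    have h2 := hC' n g _ hgt hD' (2 * σ) (by positivity) _ _
      ((isTest_arctan (pow_pos hσ0 m)).mono (by
        rw [mul_pow 2 σ m]
        have : (2 : ℝ) ≤ 2 ^ m := le_self_pow₀ (by norm_num) (by omega)
        have h3 := pow_pos hσ0 m
        nlinarith))
    have hlog2 : Real.log (2 * σ) = Real.log 2 - L + r := by
      rw [Real.log_mul (by norm_num) hσ0.ne', hσ, Real.log_mul hs.ne' (Real.exp_pos _).ne',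
        Real.log_exp, hlog]
      ring
    have h3 : |Real.log (2 * σ)| ≤ L + 2 := by
      have h4 := Real.log_pos one_lt_two
      have h5 := Real.log_two_lt_d9
      rw [hlog2, abs_le]
      constructor <;> linarith
    have h6 : (1 + |Real.log (2 * σ)|) ^ l ≤ 3 ^ l * (1 + L) ^ l := by
      rw [← mul_pow]
      exact pow_le_pow_left₀ (by positivity) (by linarith) l
    calc _ ≤ 2 * (C' * (2 * σ) * (1 + |Real.log (2 * σ)|) ^ l) :=
          h1.trans (mul_le_mul_of_nonneg_left h2 (by norm_num))
      _ ≤ 2 * (C' * (2 * σ) * (3 ^ l * (1 + L) ^ l)) := by gcongr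
      _ = _ := by rw [hσ]; ring
  obtain ⟨e1, i1⟩ := integral_resample i (h.integrable f)
  rw [e1]
  refine abs_integral_le_integral_abs.trans ?_
  have hpt : ∀ x : Fin n → ℝ, |∫ y, ψ (MvPolynomial.eval (Function.update x i y) f) ∂gm| ≤
      K * ((∑ r ∈ Finset.range (N + 1), Real.exp (1 - r) *
        Set.indicator {x : Fin n → ℝ | |MvPolynomial.eval x g| ≤ (s * Real.exp r) ^ m}
          (fun _ => (1 : ℝ)) x) + s) := by
    intro x
    have h1 := slice_pointwise m K hK1 hK (slice i x f) (hf.natDegree_slice_le i x) (j i)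
      (by omega) s hs φ ψ h N hsN
    simp only [eval_slice, coeff_slice] at h1
    simpa [Set.indicator_apply] using h1
  have hind : ∀ r : ℕ, Integrable (fun x : Fin n → ℝ => Real.exp (1 - r) *
      Set.indicator {x : Fin n → ℝ | |MvPolynomial.eval x g| ≤ (s * Real.exp r) ^ m}
          (fun _ => (1 : ℝ)) x) (stdGaussian n) := fun r =>
    ((integrable_const (1 : ℝ)).indicator (measurableSet_sublevel g _)).const_mul _
  have hsumi := integrable_finsetSum (Finset.range (N + 1)) fun r _ => hind r
  refine (integral_mono i1.abs ((hsumi.add (integrable_const s)).const_mul K) hpt).trans ?_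
  rw [integral_const_mul]
  simp only [Pi.add_apply]
  rw [integral_add hsumi (integrable_const s), integral_finsetSum _ fun r _ => hind r]
  have hterm : ∀ r ∈ Finset.range (N + 1), (∫ x : Fin n → ℝ, Real.exp (1 - r) *
      Set.indicator {x : Fin n → ℝ | |MvPolynomial.eval x g| ≤ (s * Real.exp r) ^ m}
          (fun _ => (1 : ℝ)) x ∂stdGaussian n) ≤ 12 * C' * 3 ^ l * s * (1 + L) ^ l := by
    intro r hr
    rw [integral_const_mul, integral_indicator (measurableSet_sublevel g _)]
    simp only [integral_const, smul_eq_mul, mul_one, measureReal_restrict_apply_univ]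
    calc _ ≤ Real.exp (1 - r) * (4 * C' * 3 ^ l * s * Real.exp r * (1 + L) ^ l) :=
          mul_le_mul_of_nonneg_left (hanti r hr) (Real.exp_pos _).le
      _ = (Real.exp (1 - r) * Real.exp r) * (4 * C' * 3 ^ l * s * (1 + L) ^ l) := by ring
      _ = Real.exp 1 * (4 * C' * 3 ^ l * s * (1 + L) ^ l) := by
          rw [← Real.exp_add, sub_add_cancel]
      _ ≤ 3 * (4 * C' * 3 ^ l * s * (1 + L) ^ l) := by
          have := Real.exp_one_lt_d9
          gcongr
          linarith
      _ = _ := by ring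
  have hsum := Finset.sum_le_sum hterm
  rw [Finset.sum_const, Finset.card_range, nsmul_eq_mul] at hsum
  have hN3 : ((N + 1 : ℕ) : ℝ) ≤ 2 * (1 + L) := by push_cast; linarith
  have h5 : (1 : ℝ) ≤ (1 + L) ^ (l + 1) := one_le_pow₀ (by linarith)
  rw [hlD]
  calc _ ≤ K * (2 * (1 + L) * (12 * C' * 3 ^ l * s * (1 + L) ^ l) + s * (1 + L) ^ (l + 1)) := by
        refine mul_le_mul_of_nonneg_left (add_le_add (hsum.trans ?_) ?_) (by linarith)
        · gcongr
        · simp only [integral_const, probReal_univ, smul_eq_mul, one_mul]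
          nlinarith
    _ = _ := by rw [pow_succ]; ring

/-- The smoothness estimate for the class `HasTarget`, with `s = t^{1/m}`.  Only `|coeff_j f| ≥ 1` for
one top monomial is needed. -/
theorem smooth_log (m : ℕ) (hm : 1 ≤ m) (D : ℕ) : 1 ≤ D → ∃ C : ℝ, 1 ≤ C ∧
    ∀ (n : ℕ) (f : MvPolynomial (Fin n) ℝ) (j : Fin n →₀ ℕ), HasTarget m f j →
      j.degree = D → ∀ s : ℝ, 0 < s → ∀ φ ψ : ℝ → ℝ, IsTest (s ^ m) φ ψ →
        |∫ x, ψ (MvPolynomial.eval x f) ∂stdGaussian n| ≤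
          C * s * (1 + |Real.log s|) ^ (D - m) := by
  have htriv : ∀ (n : ℕ) (f : MvPolynomial (Fin n) ℝ) (C s : ℝ) (l : ℕ) (φ ψ : ℝ → ℝ),
      1 ≤ C → 1 ≤ s → IsTest (s ^ m) φ ψ →
      |∫ x, ψ (MvPolynomial.eval x f) ∂stdGaussian n| ≤ C * s * (1 + |Real.log s|) ^ l := by
    intro n f C s l φ ψ hC hs h
    refine (h.abs_integral_le_one f).trans ?_
    have h1 : (1 : ℝ) ≤ (1 + |Real.log s|) ^ l :=
      one_le_pow₀ (by linarith [abs_nonneg (Real.log s)])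
    have h2 : 1 ≤ C * s := by nlinarith
    nlinarith
  induction D using Nat.strong_induction_on with
  | _ D ih =>
    intro hD
    rcases le_or_gt D m with hDm | hDm
    · obtain ⟨C, hC1, hC⟩ := smooth_nolog m D hD
      refine ⟨C, hC1, fun n f j hf hj s hs φ ψ h => ?_⟩
      rcases le_or_gt 1 s with hs1 | hs1
      · exact htriv n f C s _ φ ψ hC1 hs1 h
      · rw [Nat.sub_eq_zero_of_le hDm, pow_zero, mul_one]
        exact hC n f j hf hj s hs φ ψ (h.mono (pow_le_pow_of_le_one hs.le hs1.le hDm))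
    · obtain ⟨K, hK1, hK⟩ := oneDim_bound m hm
      have hch : ∀ D' : ℕ, ∃ C : ℝ, 1 ≤ C ∧ (1 ≤ D' → D' < D →
          ∀ (n : ℕ) (f : MvPolynomial (Fin n) ℝ) (j : Fin n →₀ ℕ), HasTarget m f j →
            j.degree = D' → ∀ s : ℝ, 0 < s → ∀ φ ψ : ℝ → ℝ, IsTest (s ^ m) φ ψ →
            |∫ x, ψ (MvPolynomial.eval x f) ∂stdGaussian n| ≤
              C * s * (1 + |Real.log s|) ^ (D' - m)) := by
        intro D'
        by_cases h : 1 ≤ D' ∧ D' < D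
        · obtain ⟨C, hC1, hC⟩ := ih D' h.2 h.1
          exact ⟨C, hC1, fun _ _ => hC⟩
        · exact ⟨1, le_rfl, fun h1 h2 => absurd ⟨h1, h2⟩ h⟩
      choose c hc1 hc using hch
      set C' := ∑ D' ∈ Finset.range (D + 1), c D' with hC'
      have hcle : ∀ D' < D, c D' ≤ C' := fun D' hD' =>
        Finset.single_le_sum (f := c) (fun r _ => zero_le_one.trans (hc1 r))
          (Finset.mem_range.2 (by omega))
      have hC'1 : 1 ≤ C' := (hc1 0).trans (hcle 0 (by omega))
      refine ⟨K * (24 * C' * 3 ^ (D - 1 - m) + 1), ?_, fun n f j hf hj s hs φ ψ h => ?_⟩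
      · have : (0 : ℝ) ≤ 24 * C' * 3 ^ (D - 1 - m) := by positivity
        nlinarith
      rcases le_or_gt 1 s with hs1 | hs1
      · refine htriv n f _ s _ φ ψ ?_ hs1 h
        have : (0 : ℝ) ≤ 24 * C' * 3 ^ (D - 1 - m) := by positivity
        nlinarith
      obtain ⟨i, hi⟩ : ∃ i, j i ≠ 0 := by
        by_contra! hcon
        have : j = 0 := Finsupp.ext hcon
        rw [this, map_zero] at hj
        omega
      have hdeg := degree_erase_add j i
      have hjm := hf.apply_le j hf.mem_support i
      refine smooth_step m D hm C' hC'1 (j.erase i).degree ?_ hDm K hK1 hK n f j hf i hi rfl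
        s hs hs1 φ ψ h
      intro n' f' j' hf' hj' s' hs' φ' ψ' h'
      refine (hc _ (by omega) (by omega) n' f' j' hf' hj' s' hs' φ' ψ' h').trans ?_
      have h1 : (1 + |Real.log s'|) ^ ((j.erase i).degree - m) ≤
          (1 + |Real.log s'|) ^ (D - 1 - m) :=
        pow_le_pow_right₀ (by linarith [abs_nonneg (Real.log s')]) (by omega)
      have h2 := hcle (j.erase i).degree (by omega)
      have h3 : 0 < C' := by linarith
      gcongr

/-! ### Absolute continuity and the density -/

/-- A test function with arbitrarily small supremum whose derivative is one on a given closed null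
set: the primitive of a bump supported in an open set of measure less than `ε`. -/
theorem exists_isTest_bump {K : Set ℝ} (hK : IsClosed K) (hK0 : volume K = 0) {ε : ℝ} (hε : 0 < ε) :
    ∃ φ ψ : ℝ → ℝ, IsTest ε φ ψ ∧ (∀ u, 0 ≤ ψ u) ∧ ∀ u ∈ K, ψ u = 1 := by
  obtain ⟨U, hKU, hU, hUε⟩ := K.exists_isOpen_lt_of_lt (μ := volume) (ENNReal.ofReal ε)
    (by rw [hK0]; exact ENNReal.ofReal_pos.2 hε)
  obtain ⟨g, hg0, hg1, hg⟩ := exists_continuous_zero_one_of_isClosed hU.isClosed_compl hK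
    (Set.disjoint_left.2 fun x hx hx' => hx (hKU hx'))
  have hUfin : volume U ≠ ⊤ := (hUε.trans ENNReal.ofReal_lt_top).ne
  refine ⟨fun x => ∫ y in (0 : ℝ)..x, g y, g, ⟨fun u => ?_, g.continuous, fun u => ?_, fun u => ?_⟩,
    fun u => (hg u).1, fun u hu => hg1 hu⟩
  · exact intervalIntegral.integral_hasDerivAt_right (g.continuous.intervalIntegrable _ _)
      (g.continuous.stronglyMeasurableAtFilter _ _) g.continuous.continuousAt
  · have h1 := intervalIntegral.norm_integral_le_integral_norm_uIoc (f := g) (a := 0) (b := u)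
      (μ := volume)
    have hint : Integrable (U.indicator fun _ => (1 : ℝ)) :=
      (integrable_indicator_iff hU.measurableSet).2 (integrableOn_const hUfin (by simp))
    have hle : ∀ x, ‖g x‖ ≤ U.indicator (fun _ => (1 : ℝ)) x := by
      intro x
      by_cases hx : x ∈ U
      · rw [Set.indicator_of_mem hx, Real.norm_eq_abs, abs_of_nonneg (hg x).1]
        exact (hg x).2
      · rw [Set.indicator_of_notMem hx, hg0 hx]; simp
    have hgint : Integrable (fun x => ‖g x‖) :=
      hint.mono' g.continuous.norm.aestronglyMeasurable
        (Filter.Eventually.of_forall fun x => by rw [norm_norm]; exact hle x)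
    rw [Real.norm_eq_abs] at h1
    calc _ ≤ ∫ x in Set.uIoc 0 u, ‖g x‖ := h1
      _ ≤ ∫ x, ‖g x‖ := setIntegral_le_integral hgint
          (Filter.Eventually.of_forall fun x => norm_nonneg _)
      _ ≤ ∫ x, U.indicator (fun _ => (1 : ℝ)) x := integral_mono hgint hint hle
      _ = volume.real U := by
          rw [integral_indicator hU.measurableSet]; simp
      _ ≤ ε := ENNReal.toReal_le_of_le_ofReal hε.le hUε.le
  · rw [abs_of_nonneg (hg u).1]
    exact (hg u).2

/-- A law satisfying the smoothness estimate charges no compact null set. -/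
theorem absolutelyContinuous_of_isTest (μ : Measure ℝ) [IsFiniteMeasure μ] (m l : ℕ) (C : ℝ)
    (h : ∀ s : ℝ, 0 < s → ∀ φ ψ : ℝ → ℝ, IsTest (s ^ m) φ ψ →
      |∫ u, ψ u ∂μ| ≤ C * s * (1 + |Real.log s|) ^ l) : μ ≪ volume := by
  refine Measure.AbsolutelyContinuous.mk fun A hA hA0 => ?_
  rw [hA.measure_eq_iSup_isCompact]
  simp only [ENNReal.iSup_eq_zero]
  intro K hKA hK
  have hK0 : volume K = 0 := measure_mono_null hKA hA0
  -- the estimate at `s = exp (1 - y)`, for which `1 + |log s| = y`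
  have hbd : ∀ y : ℝ, 1 ≤ y → μ.real K ≤ C * Real.exp 1 * (y ^ l * Real.exp (-y)) := by
    intro y hy
    obtain ⟨φ, ψ, ht, h0, h1⟩ := exists_isTest_bump hK.isClosed hK0
      (pow_pos (Real.exp_pos (1 - y)) m)
    have hint : Integrable ψ μ := integrable_of_continuous_bdd _ ht.continuous 1 ht.abs_deriv_le
    have h2 : μ.real K ≤ ∫ u, ψ u ∂μ := by
      rw [← integral_indicator_one hK.measurableSet]
      refine integral_mono ((integrable_const (1 : ℝ)).indicator hK.measurableSet) hint fun u => ?_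
      by_cases hu : u ∈ K
      · rw [Set.indicator_of_mem hu, h1 u hu]; rfl
      · rw [Set.indicator_of_notMem hu]; exact h0 u
    refine h2.trans ((le_abs_self _).trans ((h _ (Real.exp_pos _) φ ψ ht).trans (le_of_eq ?_)))
    rw [Real.log_exp, abs_of_nonpos (by linarith), sub_eq_add_neg, Real.exp_add]
    ring
  have hlim := (Real.tendsto_pow_mul_exp_neg_atTop_nhds_zero l).const_mul (C * Real.exp 1)
  rw [mul_zero] at hlim
  have := ge_of_tendsto hlim ((Filter.eventually_ge_atTop 1).mono hbd)
  exact (measureReal_eq_zero_iff).1 (le_antisymm this measureReal_nonneg)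

/-- The supremum defining `topCoeff` is over a finite set, so it is attained. -/
theorem exists_hasTarget {n m : ℕ} {f : MvPolynomial (Fin n) ℝ}
    (hm : ∀ i : Fin n, f.degreeOf i ≤ m) (hf : topCoeff f = 1) :
    ∃ j : Fin n →₀ ℕ, HasTarget m f j ∧ j.degree = f.totalDegree := by
  have hmem : topCoeff f ∈ {c : ℝ | ∃ j : Fin n →₀ ℕ, (j.sum fun _ e => e) = f.totalDegree ∧
      c = |MvPolynomial.coeff j f|} := by
    refine Set.Nonempty.csSup_mem ?_ ?_
    · by_contra hcon
      rw [Set.not_nonempty_iff_eq_empty] at hcon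
      rw [topCoeff, hcon, Real.sSup_empty] at hf
      exact zero_ne_one hf
    · refine (((f.support.finite_toSet.image fun j => |MvPolynomial.coeff j f|).insert 0)).subset ?_
      rintro c ⟨j, -, rfl⟩
      by_cases hj : j ∈ f.support
      · exact Or.inr ⟨j, hj, rfl⟩
      · rw [MvPolynomial.notMem_support_iff.1 hj, abs_zero]
        exact Or.inl rfl
  obtain ⟨j, hj, hc⟩ := hmem
  rw [hf] at hc
  have hdeg : ∀ e : Fin n →₀ ℕ, e.degree = e.sum fun _ e => e := fun e => rfl
  refine ⟨j, ⟨hc.le, fun e he => ?_, fun e he i => ?_⟩, hj⟩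
  · rw [hdeg, hdeg, hj]
    exact MvPolynomial.le_totalDegree he
  · exact (MvPolynomial.monomial_le_degreeOf i he).trans (hm i)

/-- `smooth_log` with one constant for all degrees at most `d`, in terms of the law of `f`. -/
theorem smooth_uniform (m d : ℕ) (hm : 1 ≤ m) : ∃ C : ℝ, 1 ≤ C ∧
    ∀ (n : ℕ) (f : MvPolynomial (Fin n) ℝ), f.totalDegree ≠ 0 →
      (∀ i : Fin n, f.degreeOf i ≤ m) → f.totalDegree ≤ d → topCoeff f = 1 →
      ∀ s : ℝ, 0 < s → ∀ φ ψ : ℝ → ℝ, IsTest (s ^ m) φ ψ →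
        |∫ u, ψ u ∂(stdGaussian n).map (fun x => MvPolynomial.eval x f)| ≤
          C * s * (1 + |Real.log s|) ^ (d - m) := by
  choose c hc1 hc using fun D : ℕ => smooth_log m hm (D + 1) (by omega)
  have hcle : ∀ D ≤ d, c D ≤ ∑ D ∈ Finset.range (d + 1), c D := fun D hD =>
    Finset.single_le_sum (f := c) (fun r _ => zero_le_one.trans (hc1 r))
      (Finset.mem_range.2 (by omega))
  refine ⟨∑ D ∈ Finset.range (d + 1), c D, (hc1 0).trans (hcle 0 (by omega)),
    fun n f h0 hfm hfd hf s hs φ ψ h => ?_⟩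
  obtain ⟨j, hj, hjd⟩ := exists_hasTarget hfm hf
  obtain ⟨D, hD⟩ := Nat.exists_eq_succ_of_ne_zero h0
  rw [integral_map (MvPolynomial.continuous_eval f).measurable.aemeasurable
    h.continuous.aestronglyMeasurable]
  refine (hc D n f j hj (hjd.trans hD) s hs φ ψ h).trans ?_
  have h1 : (1 + |Real.log s|) ^ (D + 1 - m) ≤ (1 + |Real.log s|) ^ (d - m) :=
    pow_le_pow_right₀ (by linarith [abs_nonneg (Real.log s)]) (by omega)
  have h2 := hcle D (by omega)
  have h3 : 0 < c D := by linarith [hc1 D]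
  have h4 := h3.trans_le h2
  gcongr

/-- Main theorem, normalized form: for fixed `m ≤ d` there is `C(m,d) > 0` such that for every
non-constant polynomial `f` on `ℝⁿ` of total degree at most `d`, in which every variable enters
to a power at most `m`, with `a[f] = 1`, the density `ϱ_f` of `f(X)` (with `X` standard
Gaussian in `ℝⁿ`) satisfies `σ(ϱ_f, t) ≤ C(m,d) t^{1/m} (|ln t|^{d-m} + 1)` for all `t > 0`. -/
theorem sigma_bound_normalized (m d : ℕ) (hm : 1 ≤ m) (hmd : m ≤ d) :
    ∃ C : ℝ, 0 < C ∧
      ∀ (n : ℕ) (f : MvPolynomial (Fin n) ℝ),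
        f.totalDegree ≠ 0 →
        (∀ i : Fin n, f.degreeOf i ≤ m) →
        f.totalDegree ≤ d →
        topCoeff f = 1 →
        ∃ ρ : ℝ → ℝ, Integrable ρ ∧
          (stdGaussian n).map (fun x => MvPolynomial.eval x f)
            = volume.withDensity (fun s => ENNReal.ofReal (ρ s)) ∧
          ∀ t : ℝ, 0 < t →
            sigmaMod ρ t ≤ C * t ^ ((1 : ℝ) / m) * (|Real.log t| ^ (d - m) + 1) := by
  obtain ⟨C, hC1, hC⟩ := smooth_uniform m d hm
  refine ⟨C * 2 ^ (d - m), by positivity, fun n f h0 hfm hfd hf => ?_⟩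
  have hmain := hC n f h0 hfm hfd hf
  set μ := (stdGaussian n).map (fun x => MvPolynomial.eval x f) with hμ
  have : IsProbabilityMeasure (_root_.stdGaussian n) := by
    unfold _root_.stdGaussian; infer_instance
  have : IsProbabilityMeasure μ :=
    Measure.isProbabilityMeasure_map (MvPolynomial.continuous_eval f).measurable.aemeasurable
  have hac : μ ≪ volume := absolutelyContinuous_of_isTest μ m (d - m) C hmain
  refine ⟨fun s => (μ.rnDeriv volume s).toReal, Measure.integrable_toReal_rnDeriv, ?_, ?_⟩
  · rw [← Measure.withDensity_rnDeriv_eq μ volume hac]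
    refine withDensity_congr_ae ?_
    rw [Measure.withDensity_rnDeriv_eq μ volume hac]
    filter_upwards [Measure.rnDeriv_lt_top μ volume] with x hx
    exact (ENNReal.ofReal_toReal hx.ne).symm
  intro t ht
  have hmpos : (0 : ℝ) < m := by exact_mod_cast hm
  have hrhs : 0 ≤ C * 2 ^ (d - m) * t ^ ((1 : ℝ) / m) * (|Real.log t| ^ (d - m) + 1) := by
    positivity
  refine Real.sSup_le ?_ hrhs
  rintro r ⟨φ, hφ, -, hφt, hφ1, rfl⟩
  have htest : IsTest ((t ^ ((1 : ℝ) / m)) ^ m) φ (deriv φ) := by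
    refine ⟨fun u => ((hφ.differentiable (by simp)) u).hasDerivAt,
      hφ.continuous_deriv (by simp), fun u => ?_, hφ1⟩
    rw [← Real.rpow_natCast, ← Real.rpow_mul ht.le, one_div_mul_cancel hmpos.ne', Real.rpow_one]
    exact hφt u
  have hint : ∫ s, deriv φ s * (μ.rnDeriv volume s).toReal = ∫ s, deriv φ s ∂μ := by
    rw [← integral_rnDeriv_smul hac]
    simp only [smul_eq_mul, mul_comm]
  rw [hint]
  refine (le_abs_self _).trans ((hmain _ (Real.rpow_pos_of_pos ht _) φ _ htest).trans ?_)
  have hlog : |Real.log (t ^ ((1 : ℝ) / m))| ≤ |Real.log t| := by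
    rw [Real.log_rpow ht, abs_mul]
    refine mul_le_of_le_one_left (abs_nonneg _) ?_
    rw [abs_of_pos (by positivity), div_le_one hmpos]
    exact_mod_cast hm
  have hpow : (1 + |Real.log (t ^ ((1 : ℝ) / m))|) ^ (d - m) ≤
      2 ^ (d - m) * (|Real.log t| ^ (d - m) + 1) := by
    set L := |Real.log t|
    have hL : 0 ≤ L := abs_nonneg _
    have h1 : 1 + |Real.log (t ^ ((1 : ℝ) / m))| ≤ 2 * max L 1 := by
      linarith [le_max_left L 1, le_max_right L 1]
    refine (pow_le_pow_left₀ (by positivity) h1 _).trans ?_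
    rw [mul_pow]
    refine mul_le_mul_of_nonneg_left ?_ (by positivity)
    rcases le_total L 1 with h | h
    · rw [max_eq_right h, one_pow]
      linarith [pow_nonneg hL (d - m)]
    · rw [max_eq_left h]
      linarith
  calc _ ≤ C * t ^ ((1 : ℝ) / m) * (2 ^ (d - m) * (|Real.log t| ^ (d - m) + 1)) :=
        mul_le_mul_of_nonneg_left hpow (by positivity)
    _ = _ := by ring
end
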